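/- arXiv:2002.03361 — 5 statements merged into one kernel-verified Lean document; each statement's English description precedes it below -/
import Mathlib

section
/- For each prime p, the limit η_p := lim_{k→∞} c_{k,p} p^k exists, and for consecutive primes p < q one has c_{k,p} = η_p p^{-k} + O_p(q^{-k}). -/
open Filter Real Asymptotics
open scoped Classical Topology BigOperators

/-- The finite set of primes `p ≤ x`, for a real number `x`. -/
noncomputable def primesUpTo (x : ℝ) : Finset ℕ :=
  (Finset.range (⌊x⌋₊ + 1)).filter Nat.Prime

/-- `n` is `x`-smooth: `n` is a positive integer all of whose prime factors are `≤ x`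
(equivalently, `P⁺(n) ≤ x`). -/
def IsSmooth (x : ℝ) (n : ℕ) : Prop := 0 < n ∧ ∀ p ∈ n.primeFactors, (p : ℝ) ≤ x

/-- `Ω n`: number of prime factors of `n` counted with multiplicity. -/
def bigOmega (n : ℕ) : ℕ := n.primeFactorsList.length

/-- Truncated prime zeta function `Z(t, x) = ∑_{p ≤ x} p^{-t}`. -/
noncomputable def Ztr (t x : ℝ) : ℝ := ∑ p ∈ primesUpTo x, (p : ℝ) ^ (-t)

/-- Prime zeta function `Z(j) = ∑_p p^{-j}`. -/
noncomputable def Zp (j : ℕ) : ℝ := ∑' p : Nat.Primes, (1 : ℝ) / ((p : ℕ) : ℝ) ^ j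

lemma bdd_of_rec (u b : ℕ → ℝ) (K θ : ℝ) (hθ0 : 0 ≤ θ) (hθ : θ < 1)
    (hb0 : b 0 = 0) (hb : ∀ j, |b j| ≤ K * θ ^ j)
    (hrec : ∀ k : ℕ, (k : ℝ) * u k = ∑ x ∈ Finset.HasAntidiagonal.antidiagonal k, u x.1 * b x.2) :
    ∃ M, ∀ k, |u k| ≤ M := by
  have hK : 0 ≤ K := by
    have := hb 0
    simp [hb0] at this
    exact this
  obtain ⟨N, hN⟩ := exists_nat_ge (K * (1 - θ)⁻¹)
  refine ⟨∑ i ∈ Finset.range (N + 1), |u i|, ?_⟩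
  set M := ∑ i ∈ Finset.range (N + 1), |u i| with hM
  have hM0 : 0 ≤ M := Finset.sum_nonneg fun _ _ => abs_nonneg _
  intro k
  induction k using Nat.strong_induction_on with
  | _ k ih =>
    by_cases hk : k < N + 1
    · exact Finset.single_le_sum (f := fun i => |u i|) (fun _ _ => abs_nonneg _)
        (Finset.mem_range.2 hk)
    · have hkN : (N : ℝ) < k := by exact_mod_cast (by omega : N < k)
      have hN0 : (0 : ℝ) ≤ N := Nat.cast_nonneg _
      have hkpos : (0 : ℝ) < k := by linarith
      have h1 : (k : ℝ) * |u k| ≤ ∑ x ∈ Finset.HasAntidiagonal.antidiagonal k, M * (K * θ ^ x.2) := by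
        have : (k : ℝ) * |u k| = |(k : ℝ) * u k| := by
          rw [abs_mul, abs_of_pos hkpos]
        rw [this, hrec]
        refine (Finset.abs_sum_le_sum_abs _ _).trans (Finset.sum_le_sum ?_)
        rintro ⟨i, j⟩ hij
        rw [Finset.HasAntidiagonal.mem_antidiagonal] at hij
        simp only at hij ⊢
        rcases Nat.eq_zero_or_pos j with rfl | hj
        · simp [hb0]; positivity
        · rw [abs_mul]
          exact mul_le_mul (ih i (by omega)) (hb j) (abs_nonneg _) hM0
      have h2 : ∑ x ∈ Finset.HasAntidiagonal.antidiagonal k, M * (K * θ ^ x.2) ≤ M * (K * (1 - θ)⁻¹) := by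
        rw [← Finset.mul_sum, ← Finset.mul_sum]
        refine mul_le_mul_of_nonneg_left (mul_le_mul_of_nonneg_left ?_ hK) hM0
        rw [← Finset.Nat.sum_antidiagonal_swap]
        rw [Finset.Nat.sum_antidiagonal_eq_sum_range_succ_mk]
        simp only [Prod.snd_swap]
        rw [← tsum_geometric_of_lt_one hθ0 hθ]
        exact (summable_geometric_of_lt_one hθ0 hθ).sum_le_tsum _ (fun _ _ => by positivity)
      have h3 : M * (K * (1 - θ)⁻¹) ≤ M * k := mul_le_mul_of_nonneg_left (by linarith) hM0
      have : (k : ℝ) * |u k| ≤ k * M := by linarith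
      exact le_of_mul_le_mul_left this hkpos

noncomputable def Bc (q j : ℕ) : ℝ :=
  (if j < 2 then 0 else Zp j) -
    (if j = 0 then 0 else ∑ p ∈ (Finset.range q).filter Nat.Prime, (1 / (p : ℝ)) ^ j)

lemma Bc_zero (q : ℕ) : Bc q 0 = 0 := by simp [Bc]

lemma Bc_bound (q : ℕ) (hq : q.Prime) : ∃ K, ∀ j, |Bc q j| ≤ K * (1 / (q : ℝ)) ^ j := by
  have hq0 : (0 : ℝ) < q := by exact_mod_cast hq.pos
  let f : ℕ → ℕ → ℝ := fun j n => if n.Prime then (1 / (n : ℝ)) ^ j else 0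
  have hf0 : ∀ j n, 0 ≤ f j n := by
    intro j n; simp only [f]; split_ifs <;> positivity
  have hs : ∀ j, 2 ≤ j → Summable (f j) := by
    intro j hj
    refine Summable.of_nonneg_of_le (hf0 j) (fun n => ?_)
      (Real.summable_one_div_nat_pow.2 (by omega : 1 < j))
    simp only [f]; split_ifs
    · rw [one_div_pow]
    · positivity
  have hZ : ∀ j, Zp j = ∑' n, f j n := by
    intro j
    have := tsum_subtype {n : ℕ | n.Prime} (fun n : ℕ => (1 / (n : ℝ)) ^ j)
    have h2 : ∑' n, f j n = ∑' n, ({n : ℕ | n.Prime}.indicator (fun n : ℕ => (1 / (n : ℝ)) ^ j)) n := by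
      refine tsum_congr fun n => ?_
      simp [f, Set.indicator_apply]
    rw [h2, ← this]
    unfold Zp
    refine tsum_congr fun n => ?_
    rw [one_div_pow]
  have hB : ∀ j, 2 ≤ j → Bc q j = ∑' n, f j (n + q) := by
    intro j hj
    have h1 := (hs j hj).sum_add_tsum_nat_add q
    unfold Bc
    rw [if_neg (by omega), if_neg (by omega), hZ, ← h1, Finset.sum_filter]
    simp [f]
  set T := ∑' n, f 2 (n + q) with hT
  have hT0 : 0 ≤ T := tsum_nonneg fun n => hf0 _ _
  refine ⟨|Bc q 1| * q + T * q ^ 2, ?_⟩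
  intro j
  have hA : 0 ≤ |Bc q 1| * q := by positivity
  have hA2 : 0 ≤ T * (q : ℝ) ^ 2 := by positivity
  rcases Nat.lt_or_ge j 2 with hj | hj
  · interval_cases j
    · rw [Bc_zero]; simp; positivity
    · rw [add_mul, pow_one]
      have : |Bc q 1| * q * (1 / (q : ℝ)) = |Bc q 1| := by field_simp
      rw [this]
      have : 0 ≤ T * (q : ℝ) ^ 2 * (1 / q) := by positivity
      linarith
  · obtain ⟨m, rfl⟩ : ∃ m, j = m + 2 := ⟨j - 2, by omega⟩
    rw [hB _ hj, abs_of_nonneg (tsum_nonneg fun n => hf0 _ _)]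
    have h1 : ∑' n, f (m + 2) (n + q) ≤ ∑' n, (1 / (q : ℝ)) ^ m * f 2 (n + q) := by
      refine Summable.tsum_le_tsum (fun n => ?_) ((summable_nat_add_iff q).2 (hs _ hj))
        (((summable_nat_add_iff q).2 (hs 2 le_rfl)).mul_left _)
      simp only [f]
      split_ifs
      · rw [pow_add]
        refine mul_le_mul_of_nonneg_right ?_ (by positivity)
        refine pow_le_pow_left₀ (by positivity) ?_ _
        refine one_div_le_one_div_of_le hq0 ?_
        push_cast
        have : (0 : ℝ) ≤ n := Nat.cast_nonneg _
        linarith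
      · simp
    rw [tsum_mul_left] at h1
    have h2 : (1 / (q : ℝ)) ^ m * T = T * q ^ 2 * (1 / (q : ℝ)) ^ (m + 2) := by
      rw [pow_add]; field_simp
    have h3 : 0 ≤ |Bc q 1| * q * (1 / (q : ℝ)) ^ (m + 2) := by positivity
    rw [add_mul]
    linarith

lemma exists_prev_prime (q : ℕ) (hq : q.Prime) (h2 : q ≠ 2) :
    ∃ p, p.Prime ∧ p < q ∧ ∀ r, p < r → r < q → ¬ r.Prime := by
  have h2q : 2 < q := lt_of_le_of_ne hq.two_le (Ne.symm h2)
  have hP := Nat.findGreatest_spec (P := Nat.Prime) (n := q - 1) (m := 2) (by omega) Nat.prime_two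
  have hle := Nat.findGreatest_le (P := Nat.Prime) (q - 1)
  refine ⟨_, hP, by omega, ?_⟩
  intro r hr hrq
  exact Nat.findGreatest_is_greatest hr (by omega)

lemma exists_next_prime (p : ℕ) :
    ∃ q, q.Prime ∧ p < q ∧ ∀ r, p < r → r < q → ¬ r.Prime := by
  have h : ∃ q, q.Prime ∧ p < q := by
    obtain ⟨q, h1, h2⟩ := Nat.exists_infinite_primes (p + 1)
    exact ⟨q, h2, by omega⟩
  refine ⟨Nat.find h, (Nat.find_spec h).1, (Nat.find_spec h).2, ?_⟩
  intro r hr hrq hp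
  exact Nat.find_min h hrq ⟨hp, hr⟩

lemma Bc_step (p q : ℕ) (hp : p.Prime) (hpq : p < q) (hcons : ∀ r, p < r → r < q → ¬ r.Prime)
    (j : ℕ) : Bc q j = Bc p j - (if j = 0 then 0 else (1 / (p : ℝ)) ^ j) := by
  have : (Finset.range q).filter Nat.Prime = insert p ((Finset.range p).filter Nat.Prime) := by
    ext r
    simp only [Finset.mem_filter, Finset.mem_range, Finset.mem_insert]
    constructor
    · rintro ⟨h1, h2⟩
      rcases lt_trichotomy r p with h | h | h
      · exact Or.inr ⟨h, h2⟩
      · exact Or.inl h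
      · exact absurd h2 (hcons r h h1)
    · rintro (rfl | ⟨h1, h2⟩)
      · exact ⟨hpq, hp⟩
      · exact ⟨h1.trans hpq, h2⟩
  unfold Bc
  rw [this, Finset.sum_insert (by simp)]
  split_ifs <;> ring

open PowerSeries in
lemma rec_step (F B : ℕ → ℝ) (a : ℝ)
    (h : ∀ k : ℕ, (k : ℝ) * F k = ∑ x ∈ Finset.HasAntidiagonal.antidiagonal k, F x.1 * B x.2)
    (G B' : ℕ → ℝ) (hG0 : G 0 = F 0) (hG : ∀ k, G (k + 1) = F (k + 1) - a * F k)
    (hB' : ∀ j, B' j = B j - (if j = 0 then 0 else a ^ j)) :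
    ∀ k : ℕ, (k : ℝ) * G k = ∑ x ∈ Finset.HasAntidiagonal.antidiagonal k, G x.1 * B' x.2 := by
  have key : (X : PowerSeries ℝ) * derivative ℝ (PowerSeries.mk (R := ℝ) F) = PowerSeries.mk (R := ℝ) F * PowerSeries.mk (R := ℝ) B := by
    ext k
    rw [coeff_mul k (PowerSeries.mk (R := ℝ) F) (PowerSeries.mk (R := ℝ) B)]
    simp only [PowerSeries.coeff_mk]
    rw [← h]
    cases k with
    | zero => simp
    | succ k =>
      rw [coeff_succ_X_mul, coeff_derivative, coeff_mk]
      push_cast; ring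
  have hGF : PowerSeries.mk (R := ℝ) G = (1 - PowerSeries.C a * X) * PowerSeries.mk (R := ℝ) F := by
    ext k
    cases k with
    | zero => simp [hG0, sub_mul, mul_assoc]
    | succ k =>
      rw [sub_mul, one_mul, map_sub, mul_assoc, coeff_C_mul, coeff_succ_X_mul]
      simp [hG]
  have hS : (1 - PowerSeries.C a * X) * (PowerSeries.mk (R := ℝ) fun j => if j = 0 then 0 else a ^ j)
      = PowerSeries.C a * X := by
    ext k
    rcases k with _ | _ | k
    · simp [sub_mul, mul_assoc]
    · rw [sub_mul, one_mul, map_sub, mul_assoc, coeff_C_mul, coeff_succ_X_mul]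
      simp
    · rw [sub_mul, one_mul, map_sub, mul_assoc, coeff_C_mul, coeff_succ_X_mul,
        coeff_C_mul, coeff_X]
      simp [pow_succ]; ring
  have hBB : PowerSeries.mk (R := ℝ) B' = PowerSeries.mk (R := ℝ) B - PowerSeries.mk (R := ℝ) fun j => if j = 0 then 0 else a ^ j := by
    ext k; simp [hB']
  have key2 : (X : PowerSeries ℝ) * derivative ℝ (PowerSeries.mk (R := ℝ) G) = PowerSeries.mk (R := ℝ) G * PowerSeries.mk (R := ℝ) B' := by
    have hd : derivative ℝ (PowerSeries.mk (R := ℝ) G) = (1 - PowerSeries.C a * X) * derivative ℝ (PowerSeries.mk (R := ℝ) F)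
        - PowerSeries.C a * PowerSeries.mk (R := ℝ) F := by
      rw [hGF, Derivation.leibniz]
      simp [Derivation.leibniz]
      ring
    rw [hd, hBB, hGF]
    linear_combination (1 - PowerSeries.C a * X) * key + (PowerSeries.mk (R := ℝ) F) * hS
  intro k
  have := congrArg (coeff k) key2
  rw [coeff_mul k (PowerSeries.mk (R := ℝ) G) (PowerSeries.mk (R := ℝ) B')] at this
  simp only [PowerSeries.coeff_mk] at this
  rw [← this]
  cases k with
  | zero => simp
  | succ k =>
    rw [coeff_succ_X_mul, coeff_derivative, coeff_mk]
    push_cast; ring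

lemma conv_step (F G : ℕ → ℝ) (p r A : ℝ) (hp : 0 < p) (hr : p < r)
    (hG : ∀ k, G (k + 1) = F (k + 1) - (1 / p) * F k) (hA : ∀ k, |G k| ≤ A / r ^ k) :
    ∃ η D : ℝ, Tendsto (fun k : ℕ => F k * p ^ k) atTop (nhds η) ∧
      ∀ k, |F k * p ^ k - η| ≤ D * (p / r) ^ k := by
  have hr0 : 0 < r := hp.trans hr
  have hρ : p / r < 1 := (div_lt_one hr0).2 hr
  have hd : ∀ k, dist (F k * p ^ k) (F (k + 1) * p ^ (k + 1)) ≤ (A * (p / r)) * (p / r) ^ k := by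
    intro k
    rw [dist_comm, Real.dist_eq]
    have h1 : F (k + 1) * p ^ (k + 1) - F k * p ^ k = G (k + 1) * p ^ (k + 1) := by
      rw [hG, pow_succ]; field_simp
    rw [h1, abs_mul, abs_of_pos (pow_pos hp (k + 1))]
    calc |G (k + 1)| * p ^ (k + 1) ≤ A / r ^ (k + 1) * p ^ (k + 1) :=
          mul_le_mul_of_nonneg_right (hA _) (by positivity)
      _ = _ := by rw [mul_assoc, ← pow_succ', div_pow]; ring
  have hc := cauchySeq_of_le_geometric _ _ hρ hd
  obtain ⟨η, hη⟩ := cauchySeq_tendsto_of_complete hc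
  refine ⟨η, A * (p / r) / (1 - p / r), hη, fun k => ?_⟩
  have := dist_le_of_le_geometric_of_tendsto _ _ hρ hd hη k
  rw [Real.dist_eq] at this
  refine this.trans (le_of_eq ?_)
  ring

theorem eta_p_exists (c : ℕ → ℝ) (hc0 : c 0 = 1)
    (hc : ∀ k, 1 ≤ k → c k = (1 / (k : ℝ)) * ∑ j ∈ Finset.Icc 2 k, c (k - j) * Zp j)
    (C : ℕ → ℕ → ℝ) (hC2 : ∀ k, C k 2 = c k)
    (hCstep : ∀ p q : ℕ, p.Prime → q.Prime → p < q → (∀ r, p < r → r < q → ¬ r.Prime) →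
      C 0 q = 1 ∧ ∀ k, 1 ≤ k → C k q = C k p - (1 / (p : ℝ)) * C (k - 1) p) :
    ∀ p q : ℕ, p.Prime → q.Prime → p < q → (∀ r, p < r → r < q → ¬ r.Prime) →
      ∃ η : ℝ, Tendsto (fun k : ℕ => C k p * (p : ℝ) ^ k) atTop (nhds η)
        ∧ (fun k : ℕ => C k p - η / (p : ℝ) ^ k) =O[atTop] fun k : ℕ => ((q : ℝ) ^ k)⁻¹ := by
  have hall : ∀ q : ℕ, q.Prime → C 0 q = 1 ∧
      ∀ k : ℕ, (k : ℝ) * C k q = ∑ x ∈ Finset.HasAntidiagonal.antidiagonal k, C x.1 q * Bc q x.2 := by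
    intro q
    induction q using Nat.strong_induction_on with
    | _ q ih =>
      intro hq
      by_cases h2 : q = 2
      · subst h2
        refine ⟨by rw [hC2, hc0], fun k => ?_⟩
        have hB2 : ∀ j, Bc 2 j = if j < 2 then 0 else Zp j := by
          intro j
          have : (Finset.range 2).filter Nat.Prime = ∅ := by
            ext r
            simp only [Finset.mem_filter, Finset.mem_range, Finset.notMem_empty, iff_false, not_and]
            intro h hp
            have := hp.two_le
            omega
          simp [Bc, this]
        simp only [hC2, hB2]
        rw [← Finset.Nat.sum_antidiagonal_swap, Finset.Nat.sum_antidiagonal_eq_sum_range_succ_mk]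
        simp only [Prod.fst_swap, Prod.snd_swap]
        rcases Nat.eq_zero_or_pos k with rfl | hk
        · simp
        · have hk0 : (k : ℝ) ≠ 0 := by positivity
          rw [hc k hk, ← mul_assoc, mul_one_div_cancel hk0, one_mul]
          refine Finset.sum_subset_zero_on_sdiff ?_ ?_ ?_
          · intro j hj
            simp only [Finset.mem_Icc, Finset.mem_range] at hj ⊢
            omega
          · intro j hj
            simp only [Finset.mem_sdiff, Finset.mem_Icc, Finset.mem_range] at hj
            rw [if_pos (by omega), mul_zero]
          · intro j hj
            simp only [Finset.mem_Icc] at hj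
            rw [if_neg (by omega)]
      · obtain ⟨p, hp, hpq, hcons⟩ := exists_prev_prime q hq h2
        obtain ⟨i0, i1⟩ := ih p hpq hp
        obtain ⟨s0, s1⟩ := hCstep p q hp hq hpq hcons
        refine ⟨s0, ?_⟩
        refine rec_step (fun k => C k p) (Bc p) (1 / (p : ℝ)) i1 (fun k => C k q) (Bc q)
          (by simp [s0, i0]) (fun k => ?_) (Bc_step p q hp hpq hcons)
        simpa using s1 (k + 1) (by omega)
  have hweak : ∀ q : ℕ, q.Prime → ∀ r : ℝ, 0 < r → r < q → ∃ A, ∀ k, |C k q| ≤ A / r ^ k := by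
    intro q hq r hr hrq
    obtain ⟨K, hK⟩ := Bc_bound q hq
    have hq0 : (0 : ℝ) < q := hr.trans hrq
    obtain ⟨M, hM⟩ := bdd_of_rec (fun k => C k q * r ^ k) (fun j => Bc q j * r ^ j) K (r / q)
      (by positivity) ((div_lt_one hq0).2 hrq) (by simp [Bc_zero])
      (fun j => by
        rw [abs_mul, abs_of_pos (pow_pos hr j)]
        refine (mul_le_mul_of_nonneg_right (hK j) (by positivity)).trans (le_of_eq ?_)
        rw [mul_assoc, ← mul_pow]
        congr 2
        ring)
      (fun k => by
        rw [← mul_assoc, (hall q hq).2 k, Finset.sum_mul]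
        refine Finset.sum_congr rfl ?_
        rintro ⟨i, j⟩ hij
        rw [Finset.HasAntidiagonal.mem_antidiagonal] at hij
        simp only at hij ⊢
        rw [← hij, pow_add]
        ring)
    refine ⟨M, fun k => ?_⟩
    rw [le_div_iff₀ (pow_pos hr k)]
    have := hM k
    rwa [abs_mul, abs_of_pos (pow_pos hr k)] at this
  have hstep : ∀ p q : ℕ, p.Prime → q.Prime → p < q → (∀ r, p < r → r < q → ¬ r.Prime) →
      ∀ k, C (k + 1) q = C (k + 1) p - (1 / (p : ℝ)) * C k p := by
    intro p q hp hq hpq hcons k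
    simpa using (hCstep p q hp hq hpq hcons).2 (k + 1) (by omega)
  have hstrong : ∀ q : ℕ, q.Prime → ∃ A, ∀ k, |C k q| ≤ A / (q : ℝ) ^ k := by
    intro q hq
    obtain ⟨q', hq', hlt, hcons⟩ := exists_next_prime q
    have hq0 : (0 : ℝ) < q := by exact_mod_cast hq.pos
    have hlt' : (q : ℝ) < q' := by exact_mod_cast hlt
    obtain ⟨A, hA⟩ := hweak q' hq' ((q + q') / 2) (by linarith) (by linarith)
    obtain ⟨η, D, hη, -⟩ := conv_step (fun k => C k q) (fun k => C k q') q _ A hq0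
      (by linarith : (q : ℝ) < (q + q') / 2) (hstep q q' hq hq' hlt hcons) hA
    obtain ⟨M, hM⟩ := (Metric.isBounded_range_of_tendsto _ hη).exists_norm_le
    refine ⟨M, fun k => ?_⟩
    rw [le_div_iff₀ (pow_pos hq0 k)]
    have := hM _ (Set.mem_range_self k)
    rwa [Real.norm_eq_abs, abs_mul, abs_of_pos (pow_pos hq0 k)] at this
  intro p q hp hq hpq hcons
  have hp0 : (0 : ℝ) < p := by exact_mod_cast hp.pos
  have hlt' : (p : ℝ) < q := by exact_mod_cast hpq
  have hq0 : (0 : ℝ) < q := hp0.trans hlt'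
  obtain ⟨A, hA⟩ := hstrong q hq
  obtain ⟨η, D, hη, hD⟩ := conv_step (fun k => C k p) (fun k => C k q) p q A hp0 hlt'
    (hstep p q hp hq hpq hcons) hA
  refine ⟨η, hη, IsBigO.of_bound D (Eventually.of_forall fun k => ?_)⟩
  have hpk := pow_pos hp0 k
  have hqk := pow_pos hq0 k
  rw [Real.norm_eq_abs, Real.norm_eq_abs, abs_of_pos (inv_pos.2 hqk)]
  have h1 : C k p - η / (p : ℝ) ^ k = (C k p * (p : ℝ) ^ k - η) / (p : ℝ) ^ k := by
    field_simp
  rw [h1, abs_div, abs_of_pos hpk, div_le_iff₀ hpk]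
  refine (hD k).trans (le_of_eq ?_)
  rw [div_pow]
  ring
end

section
/- For each prime p, the coefficient η_p = lim_{k→∞} c_{k,p} p^k equals exp(-∑_{q ≤ p} p/q) · ∏_{q > p} (1 - p/q)^{-1} e^{-p/q}, where q runs over primes; the infinite product converges. -/
open Filter Real Asymptotics
open scoped Classical Topology BigOperators

lemma aux_summable (a : ℕ → ℝ) (K : ℝ) (hK : ∀ n, |a n| ≤ K) (x : ℝ) (hx : |x| < 1) :
    Summable (fun n => ‖a n * x ^ n‖) := by
  refine Summable.of_nonneg_of_le (fun n => norm_nonneg _) (fun n => ?_)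
    ((summable_geometric_of_lt_one (abs_nonneg x) hx).mul_left K)
  rw [norm_mul, norm_pow]
  exact mul_le_mul_of_nonneg_right (hK n) (by positivity)

lemma aux_summable' (a : ℕ → ℝ) (K : ℝ) (hK : ∀ n, |a n| ≤ K) (x : ℝ) (hx : |x| < 1) :
    Summable (fun n : ℕ => ‖((n + 1 : ℝ) * a (n + 1)) * x ^ n‖) := by
  have h1 := summable_pow_mul_geometric_of_norm_lt_one (R := ℝ) 1 (r := |x|) (by simpa using hx)
  have h0 := summable_geometric_of_lt_one (abs_nonneg x) hx
  refine Summable.of_nonneg_of_le (fun n => norm_nonneg _) (fun n => ?_)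
    ((h1.add h0).mul_left K)
  rw [norm_mul, norm_pow, norm_mul]
  have : ‖(n + 1 : ℝ)‖ = n + 1 := by
    rw [Real.norm_eq_abs, abs_of_nonneg]; positivity
  rw [this]
  have hk := hK (n + 1)
  have : (n + 1 : ℝ) * ‖a (n + 1)‖ * ‖x‖ ^ n ≤ (n + 1) * K * |x| ^ n := by
    rw [Real.norm_eq_abs, Real.norm_eq_abs]; gcongr
  calc _ ≤ _ := this
    _ = _ := by ring

lemma aux_deriv (a : ℕ → ℝ) (K : ℝ) (hK : ∀ n, |a n| ≤ K) (x : ℝ) (hx : |x| < 1) :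
    HasDerivAt (fun y => ∑' n, a n * y ^ n) (∑' n : ℕ, ((n + 1 : ℝ) * a (n + 1)) * x ^ n) x := by
  obtain ⟨r, hxr, hr⟩ := exists_between hx
  have hr0 : 0 < r := lt_of_le_of_lt (abs_nonneg x) hxr
  have hrr : |r| < 1 := by rwa [abs_of_pos hr0]
  have hKn : 0 ≤ K := (abs_nonneg _).trans (hK 0)
  have hu : Summable (fun n : ℕ => K * ((n : ℝ) * r ^ (n - 1))) := by
    apply Summable.mul_left
    rw [← summable_nat_add_iff 1]
    have := aux_summable' (fun _ => 1) 1 (by simp) r hrr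
    refine this.congr (fun n => ?_)
    have h : (0:ℝ) ≤ n + 1 := by positivity
    simp [abs_of_pos hr0, abs_of_nonneg h]
  have := hasDerivAt_tsum_of_isPreconnected (t := Metric.ball (0:ℝ) r) (y₀ := 0) (y := x)
    (g := fun n y => a n * y ^ n) (g' := fun n y => a n * ((n : ℝ) * y ^ (n - 1)))
    hu Metric.isOpen_ball (convex_ball (0:ℝ) r).isPreconnected
    (fun n y _ => (hasDerivAt_pow n y).const_mul (a n))
    (fun n y hy => by
      rw [norm_mul, norm_mul, norm_pow]
      have hy' : ‖y‖ ≤ r := (mem_ball_zero_iff.1 hy).le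
      have h3 : ‖(n : ℝ)‖ = n := by simp
      rw [h3]
      have := hK n
      rw [Real.norm_eq_abs (a n)]
      gcongr)
    (by simpa using hr0)
    (by simpa using (aux_summable a K hK 0 (by simp)).of_norm)
    (by simpa using hxr)
  refine this.congr_deriv ?_
  have hs : Summable (fun n : ℕ => a n * ((n : ℝ) * x ^ (n - 1))) := by
    rw [← summable_nat_add_iff 1]
    refine (aux_summable' a K hK x hx).of_norm.congr (fun n => ?_)
    simp only [Nat.add_sub_cancel]
    push_cast
    ring
  rw [hs.tsum_eq_zero_add]
  simp
  congr 1; ext n; ring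

lemma aux_exp (d l : ℕ → ℝ) (hd0 : d 0 = 1) (hl0 : l 0 = 0) (K : ℝ) (hd : ∀ n, |d n| ≤ K)
    (hl : ∀ n, |l n| ≤ K)
    (hrec : ∀ n : ℕ, (n + 1 : ℝ) * d (n + 1) =
      ∑ ij ∈ Finset.HasAntidiagonal.antidiagonal n, d ij.1 * ((ij.2 + 1 : ℝ) * l (ij.2 + 1)))
    (η s : ℝ) (hη : Tendsto (fun n => ∑ i ∈ Finset.range n, d i) atTop (nhds η))
    (hs : Tendsto (fun n => ∑ i ∈ Finset.range n, l i) atTop (nhds s)) :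
    η = Real.exp s := by
  have h1 := Real.tendsto_tsum_powerSeries_nhdsWithin_lt hη
  have h2 := Real.tendsto_tsum_powerSeries_nhdsWithin_lt hs
  have h3 := (Real.continuous_exp.tendsto s).comp h2
  refine tendsto_nhds_unique h1 (h3.congr' ?_)
  have hmem : ∀ᶠ x : ℝ in nhdsWithin 1 (Set.Iio 1), x ∈ Metric.ball (0:ℝ) 1 := by
    have : ∀ᶠ x : ℝ in nhdsWithin 1 (Set.Iio 1), x ∈ Set.Ioo (0:ℝ) 1 :=
      Ioo_mem_nhdsLT (by norm_num)
    filter_upwards [this] with x hx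
    simp [abs_of_pos hx.1, hx.2]
  set D : ℝ → ℝ := fun y => ∑' n, d n * y ^ n with hD
  set L : ℝ → ℝ := fun y => ∑' n, l n * y ^ n with hL
  have key : ∀ x ∈ Metric.ball (0:ℝ) 1, HasDerivAt (fun y => D y * Real.exp (- L y)) 0 x := by
    intro x hx
    have hx : |x| < 1 := by simpa using hx
    have e1 := aux_deriv d K hd x hx
    have e2 := aux_deriv l K hl x hx
    have e3 := e1.mul (e2.neg.exp)
    refine e3.congr_deriv ?_
    have hc := tsum_mul_tsum_eq_tsum_sum_antidiagonal_of_summable_norm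
      (aux_summable d K hd x hx) (aux_summable' l K hl x hx)
    have : (∑' n : ℕ, ((n + 1 : ℝ) * d (n + 1)) * x ^ n) =
        D x * ∑' n : ℕ, ((n + 1 : ℝ) * l (n + 1)) * x ^ n := by
      rw [hD]
      simp only
      rw [hc]
      congr 1; ext n
      rw [hrec, Finset.sum_mul]
      refine Finset.sum_congr rfl (fun ij hij => ?_)
      rw [← Finset.HasAntidiagonal.mem_antidiagonal.1 hij]
      ring
    rw [this]
    simp only [hD, Pi.neg_apply]
    ring
  filter_upwards [hmem] with x hx
  have := Metric.isOpen_ball.is_const_of_deriv_eq_zero (convex_ball (0:ℝ) 1).isPreconnected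
    (fun x hx => (key x hx).differentiableAt.differentiableWithinAt)
    (fun x hx => (key x hx).deriv) hx (by simp : (0:ℝ) ∈ Metric.ball (0:ℝ) 1)
  have hD0 : D 0 = 1 := by
    simp only [hD]
    rw [tsum_eq_single 0 (by intro b hb; simp [hb])]; simp [hd0]
  have hL0 : L 0 = 0 := by
    simp only [hL]
    rw [tsum_eq_single 0 (by intro b hb; simp [hb])]; simp [hl0]
  simp only [hD0, hL0, neg_zero, Real.exp_zero, mul_one, Real.exp_neg] at this
  have hpos := Real.exp_pos (L x)
  show Real.exp (L x) = D x
  field_simp at this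
  exact this.symm

open PowerSeries in
lemma aux_step (F V : PowerSeries ℝ) (hF : derivative ℝ F = F * V) (p : ℝ) :
    derivative ℝ (F * (1 - C (p⁻¹) * X)) = (F * (1 - C (p⁻¹) * X)) *
      (V - PowerSeries.mk (fun j => (p⁻¹) ^ (j + 1))) := by
  have h : (1 - C (p⁻¹) * X) * PowerSeries.mk (fun j => (p⁻¹) ^ (j + 1)) = C (p⁻¹) := by
    ext n
    rw [sub_mul, one_mul, mul_assoc]
    cases n with
    | zero => simp
    | succ n =>
      simp [PowerSeries.coeff_succ_X_mul]; ring
  have hd : derivative ℝ (1 - C (p⁻¹) * X) = - C (p⁻¹) := by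
    rw [map_sub, Derivation.leibniz]
    simp 
  rw [Derivation.leibniz, hd, hF, mul_sub, mul_assoc F _ (PowerSeries.mk _), h]
  simp only [smul_eq_mul]
  ring

open PowerSeries in
lemma aux_base (c : ℕ → ℝ)
    (hc : ∀ k, 1 ≤ k → c k = (1 / (k : ℝ)) * ∑ j ∈ Finset.Icc 2 k, c (k - j) * Zp j) :
    derivative ℝ (PowerSeries.mk c) = PowerSeries.mk c *
      PowerSeries.mk (fun j => if j = 0 then 0 else Zp (j + 1)) := by
  ext n
  rw [PowerSeries.coeff_derivative, PowerSeries.coeff_mul, PowerSeries.coeff_mk,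
    hc (n + 1) (by omega), ← Finset.Nat.sum_antidiagonal_swap,
    Finset.Nat.sum_antidiagonal_eq_sum_range_succ_mk, Finset.sum_range_succ']
  have hI : Finset.Icc 2 (n + 1) = Finset.Ico 2 (n + 2) := by ext; simp; omega
  rw [hI, Finset.sum_Ico_eq_sum_range]
  have h : (n + 1 : ℝ) ≠ 0 := by positivity
  simp only [PowerSeries.coeff_mk, Prod.swap]
  push_cast
  field_simp
  simp only [mul_zero, add_zero]
  refine Finset.sum_congr rfl (fun i _ => ?_)
  have e1 : n + 1 - (2 + i) = n - (i + 1) := by omega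
  have e2 : 2 + i = i + 1 + 1 := by omega
  rw [e1, e2]

open PowerSeries in
lemma aux_shift (f g : ℕ → ℝ) (p : ℝ) (h0 : g 0 = f 0)
    (h : ∀ k, 1 ≤ k → g k = f k - (1 / p) * f (k - 1)) :
    PowerSeries.mk g = PowerSeries.mk f * (1 - C (p⁻¹) * X) := by
  ext n
  rw [mul_sub, mul_one, mul_comm (C p⁻¹), ← mul_assoc]
  cases n with
  | zero => simp [h0]
  | succ n =>
    rw [map_sub, PowerSeries.coeff_mul_C, PowerSeries.coeff_succ_mul_X]
    simp [h (n + 1) (by omega), mul_comm]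

open PowerSeries in
lemma aux_formal (c : ℕ → ℝ) (hc0 : c 0 = 1)
    (hc : ∀ k, 1 ≤ k → c k = (1 / (k : ℝ)) * ∑ j ∈ Finset.Icc 2 k, c (k - j) * Zp j)
    (C : ℕ → ℕ → ℝ) (hC2 : ∀ k, C k 2 = c k)
    (hCstep : ∀ p q : ℕ, p.Prime → q.Prime → p < q → (∀ r, p < r → r < q → ¬ r.Prime) →
      C 0 q = 1 ∧ ∀ k, 1 ≤ k → C k q = C k p - (1 / (p : ℝ)) * C (k - 1) p)
    (p : ℕ) (hp : p.Prime) : C 0 p = 1 ∧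
    derivative ℝ (PowerSeries.mk (fun k => C k p)) = PowerSeries.mk (fun k => C k p) *
      (PowerSeries.mk (fun j => if j = 0 then 0 else Zp (j + 1)) -
        ∑ r ∈ Nat.primesBelow p, PowerSeries.mk (fun j => ((r : ℝ)⁻¹) ^ (j + 1))) := by
  induction p using Nat.strong_induction_on with
  | _ q ih =>
  by_cases hq2 : q = 2
  · subst hq2
    have : Nat.primesBelow 2 = ∅ := by decide
    rw [this, Finset.sum_empty, sub_zero]
    simp only [hC2]
    exact ⟨hc0, aux_base c hc⟩
  · have hq : 2 < q := lt_of_le_of_ne hp.two_le (Ne.symm hq2)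
    have hne : (Nat.primesBelow q).Nonempty :=
      ⟨2, Nat.mem_primesBelow.2 ⟨hq, Nat.prime_two⟩⟩
    set m := (Nat.primesBelow q).max' hne with hm
    have hmm := Nat.mem_primesBelow.1 ((Nat.primesBelow q).max'_mem hne)
    rw [← hm] at hmm
    have hmax : ∀ r, m < r → r < q → ¬ r.Prime := by
      intro r h1 h2 h3
      have := (Nat.primesBelow q).le_max' r (Nat.mem_primesBelow.2 ⟨h2, h3⟩)
      omega
    obtain ⟨s0, s1⟩ := hCstep m q hmm.2 hp hmm.1 hmax
    obtain ⟨i0, i1⟩ := ih m hmm.1 hmm.2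
    refine ⟨s0, ?_⟩
    have hset : Nat.primesBelow q = insert m (Nat.primesBelow m) := by
      ext r
      simp only [Nat.mem_primesBelow, Finset.mem_insert]
      constructor
      · rintro ⟨h1, h2⟩
        rcases lt_trichotomy r m with h | h | h
        · exact Or.inr ⟨h, h2⟩
        · exact Or.inl h
        · exact absurd h2 (hmax r h h1)
      · rintro (rfl | ⟨h1, h2⟩)
        · exact hmm
        · exact ⟨h1.trans hmm.1, h2⟩
    have hnm : m ∉ Nat.primesBelow m := by simp [Nat.mem_primesBelow]
    rw [hset, Finset.sum_insert hnm,
      aux_shift (fun k => C k m) (fun k => C k q) m (by simp [s0, i0]) s1,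
      aux_step _ _ i1 m]
    congr 1
    ring

lemma aux_split (p : ℕ) (j : ℕ) :
    Summable (fun q : {q : Nat.Primes // p < (q : ℕ)} => (((q.1 : ℕ) : ℝ)⁻¹) ^ (j + 2)) ∧
    Zp (j + 2) - ∑ r ∈ Nat.primesBelow (p + 1), ((r : ℝ)⁻¹) ^ (j + 2) =
      ∑' q : {q : Nat.Primes // p < (q : ℕ)}, (((q.1 : ℕ) : ℝ)⁻¹) ^ (j + 2) := by
  have hs : Summable (fun q : Nat.Primes => (((q : ℕ) : ℝ)⁻¹) ^ (j + 2)) := by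
    have := (Nat.Primes.summable_rpow (r := -((j + 2 : ℕ) : ℝ))).2 (by push_cast; linarith [(Nat.cast_nonneg j : (0:ℝ) ≤ j)])
    refine this.congr (fun q => ?_)
    rw [Real.rpow_neg (by positivity), Real.rpow_natCast, inv_pow]
  refine ⟨hs.subtype {q : Nat.Primes | p < (q : ℕ)}, ?_⟩
  let s : Finset Nat.Primes := Finset.subtype Nat.Prime (Nat.primesBelow (p + 1))
  have h1 := hs.sum_add_tsum_subtype_compl s
  have h2 : ∑ x ∈ s, (((x : ℕ) : ℝ)⁻¹) ^ (j + 2) =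
      ∑ r ∈ Nat.primesBelow (p + 1), ((r : ℝ)⁻¹) ^ (j + 2) := by
    refine (Finset.sum_subtype_eq_sum_filter (fun r : ℕ => ((r : ℝ)⁻¹) ^ (j + 2))).trans ?_
    refine Finset.sum_congr ?_ (fun _ _ => rfl)
    ext r
    simp [Nat.mem_primesBelow]
  have hiff : ∀ x : Nat.Primes, p < (x : ℕ) ↔ x ∉ s := by
    intro x
    have hxs : x ∈ s ↔ (x : ℕ) < p + 1 ∧ (x : ℕ).Prime :=
      Finset.mem_subtype.trans Nat.mem_primesBelow
    rw [hxs]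
    have := x.2
    constructor
    · intro h h'; exact absurd h'.1 (by omega)
    · intro h; by_contra h'; exact h ⟨by omega, this⟩
  have h3 := (Equiv.subtypeEquivRight hiff).tsum_eq
    (fun x : {x // x ∉ s} => (((x.1 : ℕ) : ℝ)⁻¹) ^ (j + 2))
  have h4 : Zp (j + 2) = ∑' q : Nat.Primes, (((q : ℕ) : ℝ)⁻¹) ^ (j + 2) := by
    unfold Zp; simp
  rw [h4, ← h1, h2, ← h3, add_sub_cancel_left]
  rfl

lemma aux_log (p : ℕ) (hp : 0 < p) : ∃ S : ℝ,
    HasSum (fun q : {q : Nat.Primes // p < (q : ℕ)} =>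
      -Real.log (1 - (p : ℝ) / ((q.1 : ℕ) : ℝ)) - (p : ℝ) / ((q.1 : ℕ) : ℝ)) S ∧
    HasSum (fun j : ℕ => ∑' q : {q : Nat.Primes // p < (q : ℕ)},
      ((p : ℝ) / ((q.1 : ℕ) : ℝ)) ^ (j + 2) / ((j : ℝ) + 2)) S := by
  set t : {q : Nat.Primes // p < (q : ℕ)} → ℝ := fun q => (p : ℝ) / ((q.1 : ℕ) : ℝ) with ht
  have ht0 : ∀ q, 0 ≤ t q := fun q => by simp only [ht]; positivity
  set ρ : ℝ := p / (p + 1) with hρ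
  have hp' : (0 : ℝ) < p := by exact_mod_cast hp
  have hρ0 : 0 ≤ ρ := by positivity
  have hρ1 : ρ < 1 := by rw [hρ, div_lt_one (by positivity)]; linarith
  have htρ : ∀ q, t q ≤ ρ := fun q => by
    simp only [ht, hρ]
    have : (p : ℝ) + 1 ≤ ((q.1 : ℕ) : ℝ) := by exact_mod_cast q.2
    gcongr
  have hsq : Summable (fun q => t q ^ 2) := by
    refine ((aux_split p 0).1.mul_left ((p : ℝ) ^ 2)).congr (fun q => ?_)
    simp only [ht, div_eq_mul_inv, mul_pow]
  have hsum : Summable (fun x : {q : Nat.Primes // p < (q : ℕ)} × ℕ =>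
      t x.1 ^ (x.2 + 2) / ((x.2 : ℝ) + 2)) := by
    refine Summable.of_nonneg_of_le (fun x => ?_) (fun x => ?_)
      (hsq.mul_of_nonneg (summable_geometric_of_lt_one hρ0 hρ1) (fun q => sq_nonneg _)
        (fun n => pow_nonneg hρ0 n))
    · have := ht0 x.1
      positivity
    · have h0 := ht0 x.1
      have h1 := htρ x.1
      calc t x.1 ^ (x.2 + 2) / ((x.2 : ℝ) + 2) ≤ t x.1 ^ (x.2 + 2) := by
            apply div_le_self (by positivity)
            have : (0 : ℝ) ≤ x.2 := by positivity
            linarith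
        _ = t x.1 ^ 2 * t x.1 ^ x.2 := by ring
        _ ≤ t x.1 ^ 2 * ρ ^ x.2 := by gcongr
  obtain ⟨S, hS⟩ := hsum
  refine ⟨S, hS.prod_fiberwise (fun q => ?_), ?_⟩
  · have h1 : |t q| < 1 := by rw [abs_of_nonneg (ht0 q)]; exact (htρ q).trans_lt hρ1
    have h2 := Real.hasSum_pow_div_log_of_abs_lt_one h1
    rw [← hasSum_nat_add_iff' 1] at h2
    simp only [Finset.sum_range_one, zero_add, pow_one, Nat.cast_zero, div_one] at h2
    refine h2.congr_fun (fun j => ?_)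
    push_cast
    ring
  · have hS' := (Equiv.prodComm ℕ {q : Nat.Primes // p < (q : ℕ)}).hasSum_iff.2 hS
    refine hS'.prod_fiberwise (fun j => ?_)
    exact (hS'.summable.prod_factor j).hasSum

theorem eta_p_value (c : ℕ → ℝ) (hc0 : c 0 = 1)
    (hc : ∀ k, 1 ≤ k → c k = (1 / (k : ℝ)) * ∑ j ∈ Finset.Icc 2 k, c (k - j) * Zp j)
    (C : ℕ → ℕ → ℝ) (hC2 : ∀ k, C k 2 = c k)
    (hCstep : ∀ p q : ℕ, p.Prime → q.Prime → p < q → (∀ r, p < r → r < q → ¬ r.Prime) →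
      C 0 q = 1 ∧ ∀ k, 1 ≤ k → C k q = C k p - (1 / (p : ℝ)) * C (k - 1) p)
    (p : ℕ) (hp : p.Prime) (η : ℝ)
    (hη : Tendsto (fun k : ℕ => C k p * (p : ℝ) ^ k) atTop (nhds η)) :
    Multipliable (fun q : {q : Nat.Primes // p < (q : ℕ)} =>
        (1 - (p : ℝ) / ((q.1 : ℕ) : ℝ))⁻¹ * Real.exp (-(p : ℝ) / ((q.1 : ℕ) : ℝ)))
    ∧ η = Real.exp (-∑ q ∈ Nat.primesBelow (p + 1), (p : ℝ) / q)
        * ∏' q : {q : Nat.Primes // p < (q : ℕ)},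
            (1 - (p : ℝ) / ((q.1 : ℕ) : ℝ))⁻¹ * Real.exp (-(p : ℝ) / ((q.1 : ℕ) : ℝ)) := by
  obtain ⟨S, hS1, hS2⟩ := aux_log p hp.pos
  have hp0 : (p : ℝ) ≠ 0 := by exact_mod_cast hp.ne_zero
  have hprod : HasProd (fun q : {q : Nat.Primes // p < (q : ℕ)} =>
        (1 - (p : ℝ) / ((q.1 : ℕ) : ℝ))⁻¹ * Real.exp (-(p : ℝ) / ((q.1 : ℕ) : ℝ)))
        (Real.exp S) := by
    convert hS1.rexp using 1
    ext q
    have hq : (p : ℝ) < ((q.1 : ℕ) : ℝ) := by exact_mod_cast q.2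
    have hq0 : (0 : ℝ) < ((q.1 : ℕ) : ℝ) := lt_of_le_of_lt (by positivity) hq
    have : 0 < 1 - (p : ℝ) / ((q.1 : ℕ) : ℝ) := by
      rw [sub_pos, div_lt_one hq0]; exact hq
    simp only [Function.comp]
    rw [sub_eq_add_neg (-Real.log _), Real.exp_add, Real.exp_neg (Real.log _), Real.exp_log this, neg_div]
  refine ⟨hprod.multipliable, ?_⟩
  rw [hprod.tprod_eq, ← Real.exp_add]
  obtain ⟨h0, hF⟩ := aux_formal c hc0 hc C hC2 hCstep p hp
  have hG := aux_step _ _ hF p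
  set F := PowerSeries.mk (fun k => C k p) with hFdef
  set G := F * (1 - PowerSeries.C ((p : ℝ)⁻¹) * PowerSeries.X) with hGdef
  set V := PowerSeries.mk (fun j => if j = 0 then 0 else Zp (j + 1)) -
        ∑ r ∈ Nat.primesBelow p, PowerSeries.mk (fun j => ((r : ℝ)⁻¹) ^ (j + 1)) -
        PowerSeries.mk (fun j => ((p : ℝ)⁻¹) ^ (j + 1)) with hV
  have hVc : ∀ j, PowerSeries.coeff j V = (if j = 0 then 0 else Zp (j + 1)) -
      ∑ r ∈ Nat.primesBelow (p + 1), ((r : ℝ)⁻¹) ^ (j + 1) := by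
    intro j
    rw [Nat.primesBelow_succ, if_pos hp, Finset.sum_insert (by simp [Nat.mem_primesBelow]), hV]
    simp only [map_sub, map_sum, PowerSeries.coeff_mk]
    ring
  have hG0 : PowerSeries.coeff 0 G = 1 := by
    simp [hGdef, hFdef, h0]
  have hGs : ∀ n, PowerSeries.coeff (n + 1) G = C (n + 1) p - C n p * (p : ℝ)⁻¹ := by
    intro n
    rw [hGdef, mul_sub, mul_one, mul_comm (PowerSeries.C (p : ℝ)⁻¹), ← mul_assoc, map_sub,
      PowerSeries.coeff_mul_C, PowerSeries.coeff_succ_mul_X]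
    simp [hFdef]
  set d : ℕ → ℝ := fun n => PowerSeries.coeff n G * (p : ℝ) ^ n with hd
  have hps : ∀ n, ∑ i ∈ Finset.range (n + 1), d i = C n p * (p : ℝ) ^ n := by
    intro n
    induction n with
    | zero => simp only [zero_add, Finset.sum_range_one, hd, hG0, h0]
    | succ n ih =>
      rw [Finset.sum_range_succ, ih]
      simp only [hd, hGs]
      field_simp
      ring
  have hdη : Tendsto (fun n => ∑ i ∈ Finset.range n, d i) atTop (nhds η) := by
    rw [← tendsto_add_atTop_iff_nat 1]
    simpa only [hps] using hη
  set l : ℕ → ℝ := fun n => PowerSeries.coeff (n - 1) V * (p : ℝ) ^ n / n with hl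
  have hl0 : l 0 = 0 := by simp [hl]
  have hl1 : l 1 = -∑ q ∈ Nat.primesBelow (p + 1), (p : ℝ) / q := by
    simp only [hl, Nat.sub_self, hVc, if_true, zero_sub, zero_add, pow_one, Nat.cast_one, div_one,
      neg_mul, Finset.sum_mul]
    congr 1
    exact Finset.sum_congr rfl (fun r _ => by rw [div_eq_mul_inv, mul_comm])
  have hl2 : ∀ j, l (j + 2) = ∑' q : {q : Nat.Primes // p < (q : ℕ)},
      ((p : ℝ) / ((q.1 : ℕ) : ℝ)) ^ (j + 2) / ((j : ℝ) + 2) := by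
    intro j
    have e : j + 2 - 1 = j + 1 := by omega
    simp only [hl, e, hVc]
    rw [if_neg (by omega), (aux_split p j).2, ← tsum_mul_right, ← tsum_div_const]
    refine tsum_congr (fun q => ?_)
    push_cast
    rw [div_pow, inv_pow]
    ring
  have hls : HasSum l (-∑ q ∈ Nat.primesBelow (p + 1), (p : ℝ) / q + S) := by
    rw [← hasSum_nat_add_iff' 2]
    simp only [Finset.sum_range_succ, Finset.sum_range_zero, hl0, hl1, hl2]
    have e : -∑ q ∈ Nat.primesBelow (p + 1), (p : ℝ) / q + S -
        (0 + 0 + -∑ q ∈ Nat.primesBelow (p + 1), (p : ℝ) / q) = S := by ring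
    rw [e]
    exact hS2
  obtain ⟨M, hM⟩ : ∃ M, ∀ n, |∑ i ∈ Finset.range n, d i| ≤ M := by
    obtain ⟨M, hM⟩ := (Metric.isBounded_range_of_tendsto _ hdη).exists_norm_le
    exact ⟨M, fun n => hM _ ⟨n, rfl⟩⟩
  have hdb : ∀ n, |d n| ≤ 2 * M := by
    intro n
    have e : d n = ∑ i ∈ Finset.range (n + 1), d i - ∑ i ∈ Finset.range n, d i := by
      rw [Finset.sum_range_succ]; ring
    rw [e]
    have := abs_sub (∑ i ∈ Finset.range (n + 1), d i) (∑ i ∈ Finset.range n, d i)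
    linarith [hM n, hM (n + 1)]
  have hlb : ∀ n, |l n| ≤ ∑' n, |l n| := fun n =>
    hls.summable.abs.le_tsum n (fun _ _ => abs_nonneg _)
  refine aux_exp d l (by simp only [hd, hG0, pow_zero, mul_one]) hl0 (max (2 * M) (∑' n, |l n|))
    (fun n => (hdb n).trans (le_max_left _ _)) (fun n => (hlb n).trans (le_max_right _ _))
    (fun n => ?_) η _ hdη hls.tendsto_sum_nat
  have hcoef := congrArg (PowerSeries.coeff n) hG
  rw [PowerSeries.coeff_derivative, PowerSeries.coeff_mul n G V] at hcoef
  have e1 : (n + 1 : ℝ) * d (n + 1) =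
      (PowerSeries.coeff (n + 1) G * ((n : ℝ) + 1)) * (p : ℝ) ^ (n + 1) := by
    simp only [hd]; ring
  rw [e1, hcoef, Finset.sum_mul]
  refine Finset.sum_congr rfl (fun ij hij => ?_)
  have e2 : ((ij.2 : ℝ) + 1) ≠ 0 := by positivity
  simp only [hd, hl, Nat.add_sub_cancel]
  rw [← Finset.HasAntidiagonal.mem_antidiagonal.1 hij]
  push_cast
  field_simp
  ring
end

section
/- The coefficients c_k (defined by c₀ = 1, c_k = (1/k) ∑_{j=2}^{k} c_{k-j} Z(j)) satisfy c_k = η·2^{-k} + O(3^{-k}) as k → ∞, where η = e^{-1} ∏_{p > 2, p prime} (1 - 2/p)^{-1} e^{-2/p}. -/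
open Filter Real Asymptotics
open scoped Classical Topology BigOperators

lemma ck_algebra (c v : ℕ → ℝ) (Z : ℕ → ℝ) (hc0 : c 0 = 1)
    (hc : ∀ k, 1 ≤ k → c k = (1 / (k : ℝ)) * ∑ j ∈ Finset.Icc 2 k, c (k - j) * Z j)
    (hv0 : v 0 = -5 / 6)
    (hv : ∀ j, 1 ≤ j → Z (j + 1) = v j + (1 / 2) ^ (j + 1) + (1 / 3) ^ (j + 1)) :
    ∃ f : ℕ → ℝ, f 0 = 1 ∧
      (∀ k : ℕ, f (k + 1) * ((k : ℝ) + 1) = ∑ x ∈ Finset.HasAntidiagonal.antidiagonal k, f x.1 * v x.2) ∧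
      (∀ k, c k = ∑ x ∈ Finset.HasAntidiagonal.antidiagonal k, f x.1 * (3 * (1 / 2) ^ x.2 - 2 * (1 / 3) ^ x.2)) := by
  let C : PowerSeries ℝ := PowerSeries.mk c
  let V : PowerSeries ℝ := PowerSeries.mk v
  let W : PowerSeries ℝ := PowerSeries.mk (fun j => if j = 0 then 0 else Z (j + 1))
  let G2 : PowerSeries ℝ := PowerSeries.mk (fun j => (1 / 2 : ℝ) ^ j)
  let G3 : PowerSeries ℝ := PowerSeries.mk (fun j => (1 / 3 : ℝ) ^ j)
  let h : PowerSeries ℝ := PowerSeries.C (1 / 2 : ℝ)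
  let t : PowerSeries ℝ := PowerSeries.C (1 / 3 : ℝ)
  have hG : ∀ r : ℝ, (1 - PowerSeries.C r * PowerSeries.X) * PowerSeries.mk (fun j => r ^ j) = 1 := by
    intro r
    ext n
    rw [sub_mul, one_mul, mul_assoc]
    cases n with
    | zero => simp
    | succ n => simp [PowerSeries.coeff_succ_X_mul, PowerSeries.coeff_one, pow_succ']
  have hG2 : (1 - h * PowerSeries.X) * G2 = 1 := hG _
  have hG3 : (1 - t * PowerSeries.X) * G3 = 1 := hG _
  have hh : 2 * h = 1 := by
    have : (2 : PowerSeries ℝ) = PowerSeries.C (2 : ℝ) := (map_ofNat PowerSeries.C 2).symm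
    rw [this, ← map_mul]; norm_num
  have ht : 3 * t = 1 := by
    have : (3 : PowerSeries ℝ) = PowerSeries.C (3 : ℝ) := (map_ofNat PowerSeries.C 3).symm
    rw [this, ← map_mul]; norm_num
  have hW : W = V + h * G2 + t * G3 := by
    ext n
    rcases Nat.eq_zero_or_pos n with rfl | hn
    · simp [W, V, h, G2, t, G3, hv0]; norm_num
    · have := hv n hn
      simp only [W, V, h, G2, t, G3, map_add, PowerSeries.coeff_C_mul, PowerSeries.coeff_mk]
      rw [if_neg (by omega), this]; ring
  have hCd : PowerSeries.derivative ℝ C = C * W := by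
    ext n
    rw [PowerSeries.coeff_derivative, PowerSeries.coeff_mul, Finset.Nat.sum_antidiagonal_eq_sum_range_succ_mk,
      ← Finset.sum_range_reflect]
    simp only [C, W, PowerSeries.coeff_mk]
    rw [hc (n + 1) (by omega)]
    have e : ∑ j ∈ Finset.Icc 2 (n + 1), c (n + 1 - j) * Z j
        = ∑ j ∈ Finset.range (n + 1), c (n - j) * (if j = 0 then 0 else Z (j + 1)) := by
      rw [Finset.sum_range_succ', ← Finset.Ico_add_one_right_eq_Icc, Finset.sum_Ico_eq_sum_range]
      simp only [if_true, mul_zero, add_zero]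
      refine Finset.sum_congr (by congr 1) ?_
      intro j _
      rw [if_neg (by omega)]
      have e1 : n + 1 - (2 + j) = n - (j + 1) := by omega
      have e2 : 2 + j = j + 1 + 1 := by omega
      rw [e1, e2]
    rw [e]
    push_cast
    have : (n : ℝ) + 1 ≠ 0 := by positivity
    field_simp
    refine Finset.sum_congr rfl ?_
    intro j hj
    have := Finset.mem_range.1 hj
    have e1 : n.succ - 1 - j = n - j := by omega
    have e2 : n - (n - j) = j := by omega
    simp only [e1, e2]
  let P : PowerSeries ℝ := (1 - h * PowerSeries.X) * (1 - t * PowerSeries.X)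
  have hP : PowerSeries.derivative ℝ P = -h * (1 - t * PowerSeries.X) - t * (1 - h * PowerSeries.X) := by
    simp only [P, h, t, Derivation.leibniz, map_sub, smul_eq_mul, PowerSeries.derivative_C, PowerSeries.derivative_X,
      Derivation.map_one_eq_zero]
    ring
  have hFd : PowerSeries.derivative ℝ (C * P) = (C * P) * V := by
    rw [Derivation.leibniz, hCd, hP, hW]
    simp only [smul_eq_mul, P]
    linear_combination (C * (1 - t * PowerSeries.X) * h) * hG2 + (C * (1 - h * PowerSeries.X) * t) * hG3
  have hinv : P * (3 * G2 - 2 * G3) = 1 := by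
    simp only [P]
    linear_combination (3 * (1 - t * PowerSeries.X)) * hG2 - (2 * (1 - h * PowerSeries.X)) * hG3 - PowerSeries.X * ht + PowerSeries.X * hh
  have hC : C = (C * P) * (3 * G2 - 2 * G3) := by rw [mul_assoc, hinv, mul_one]
  refine ⟨fun k => PowerSeries.coeff k (C * P), ?_, ?_, ?_⟩
  · simp [C, P, hc0]
  · intro k
    have := congrArg (PowerSeries.coeff k) hFd
    rw [PowerSeries.coeff_derivative, PowerSeries.coeff_mul _ (C * P)] at this
    simpa only [V, PowerSeries.coeff_mk] using this
  · intro k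
    have := congrArg (PowerSeries.coeff k) hC
    rw [PowerSeries.coeff_mul] at this
    have e3 : (3 : PowerSeries ℝ) = PowerSeries.C (3 : ℝ) := (map_ofNat PowerSeries.C 3).symm
    have e2 : (2 : PowerSeries ℝ) = PowerSeries.C (2 : ℝ) := (map_ofNat PowerSeries.C 2).symm
    rw [e3, e2] at this
    simpa only [C, PowerSeries.coeff_mk, map_sub, PowerSeries.coeff_C_mul, G2, G3] using this

lemma ck_bound (f v : ℕ → ℝ)
    (hf : ∀ k : ℕ, f (k + 1) * ((k : ℝ) + 1) = ∑ x ∈ Finset.HasAntidiagonal.antidiagonal k, f x.1 * v x.2)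
    (hs : Summable fun j => |v j| * 4 ^ (j + 1)) :
    ∃ M, 0 ≤ M ∧ ∀ k, |f k| * 4 ^ k ≤ M := by
  set S := ∑' j, |v j| * 4 ^ (j + 1) with hS
  obtain ⟨N, hN⟩ := exists_nat_ge S
  set M := ∑ i ∈ Finset.range (N + 1), |f i| * 4 ^ i with hM
  have hM0 : 0 ≤ M := Finset.sum_nonneg fun i _ => by positivity
  refine ⟨M, hM0, ?_⟩
  intro k
  induction k using Nat.strong_induction_on with
  | _ k ih =>
  by_cases hk : k ≤ N
  · exact Finset.single_le_sum (f := fun i => |f i| * 4 ^ i) (fun i _ => by positivity)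
      (Finset.mem_range.2 (by omega))
  · obtain ⟨m, rfl⟩ : ∃ m, k = m + 1 := ⟨k - 1, by omega⟩
    have hm : (0 : ℝ) < (m : ℝ) + 1 := by positivity
    have h1 : |f (m + 1)| * ((m : ℝ) + 1) ≤ ∑ x ∈ Finset.HasAntidiagonal.antidiagonal m, |f x.1| * |v x.2| := by
      rw [← abs_of_pos hm, ← abs_mul, hf]
      refine (Finset.abs_sum_le_sum_abs _ _).trans (le_of_eq ?_)
      simp [abs_mul]
    have h2 : (∑ x ∈ Finset.HasAntidiagonal.antidiagonal m, |f x.1| * |v x.2|) * 4 ^ (m + 1) ≤ M * S := by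
      rw [Finset.sum_mul]
      calc _ = ∑ x ∈ Finset.HasAntidiagonal.antidiagonal m, (|f x.1| * 4 ^ x.1) * (|v x.2| * 4 ^ (x.2 + 1)) := by
            refine Finset.sum_congr rfl ?_
            rintro ⟨a, b⟩ hx
            have : a + b = m := Finset.HasAntidiagonal.mem_antidiagonal.1 hx
            subst this
            simp only; ring
        _ ≤ ∑ x ∈ Finset.HasAntidiagonal.antidiagonal m, M * (|v x.2| * 4 ^ (x.2 + 1)) := by
            refine Finset.sum_le_sum ?_
            rintro ⟨a, b⟩ hx
            have : a + b = m := Finset.HasAntidiagonal.mem_antidiagonal.1 hx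
            exact mul_le_mul_of_nonneg_right (ih a (by omega)) (by positivity)
        _ = M * ∑ j ∈ Finset.range (m + 1), (|v j| * 4 ^ (j + 1)) := by
            rw [← Finset.mul_sum, Finset.Nat.sum_antidiagonal_eq_sum_range_succ_mk,
              ← Finset.sum_range_reflect]
            congr 1
            refine Finset.sum_congr rfl ?_
            intro j hj
            have := Finset.mem_range.1 hj
            have e : m - (m.succ - 1 - j) = j := by omega
            simp only [e]
        _ ≤ M * S := by
            refine mul_le_mul_of_nonneg_left ?_ hM0
            exact hs.sum_le_tsum _ (fun i _ => by positivity)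
    have h3 : S ≤ (m : ℝ) + 1 := by
      refine hN.trans ?_
      exact_mod_cast (by omega : N ≤ m + 1)
    have h4 : |f (m + 1)| * 4 ^ (m + 1) * ((m : ℝ) + 1) ≤ M * ((m : ℝ) + 1) := by
      calc _ = (|f (m + 1)| * ((m : ℝ) + 1)) * 4 ^ (m + 1) := by ring
        _ ≤ _ := mul_le_mul_of_nonneg_right h1 (by positivity)
        _ ≤ _ := h2
        _ ≤ _ := mul_le_mul_of_nonneg_left h3 hM0
    exact le_of_mul_le_mul_right h4 hm

lemma ck_exp (f v : ℕ → ℝ) (h0 : f 0 = 1)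
    (hf : ∀ k : ℕ, f (k + 1) * ((k : ℝ) + 1) = ∑ x ∈ Finset.HasAntidiagonal.antidiagonal k, f x.1 * v x.2)
    (hs : Summable fun j => |v j| * 4 ^ (j + 1)) (M : ℝ) (hM : 0 ≤ M)
    (hb : ∀ k, |f k| * 4 ^ k ≤ M) :
    ∑' k, f k * 2 ^ k = Real.exp (∑' j : ℕ, v j * 2 ^ (j + 1) / ((j : ℝ) + 1)) := by
  have hb' : ∀ k, |f k| * 3 ^ k ≤ M * (3 / 4) ^ k := by
    intro k
    calc |f k| * 3 ^ k = (|f k| * 4 ^ k) * (3 / 4) ^ k := by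
          rw [mul_assoc, ← mul_pow]; norm_num
      _ ≤ _ := mul_le_mul_of_nonneg_right (hb k) (by positivity)
  have hball : ∀ y ∈ Metric.ball (0 : ℝ) 3, |y| ≤ 3 := fun y hy => by
    rw [mem_ball_zero_iff, Real.norm_eq_abs] at hy; exact hy.le
  have hmem0 : (0 : ℝ) ∈ Metric.ball (0 : ℝ) 3 := by simp
  have hgeo : Summable fun k : ℕ => M * (3 / 4 : ℝ) ^ k :=
    (summable_geometric_of_lt_one (by norm_num) (by norm_num)).mul_left M
  have hFs : ∀ y ∈ Metric.ball (0 : ℝ) 3, Summable fun k => ‖f k * y ^ k‖ := by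
    intro y hy
    refine Summable.of_nonneg_of_le (fun _ => norm_nonneg _) (fun k => ?_) hgeo
    rw [Real.norm_eq_abs, abs_mul, abs_pow]
    exact (mul_le_mul_of_nonneg_left (pow_le_pow_left₀ (abs_nonneg _) (hball y hy) k)
      (abs_nonneg _)).trans (hb' k)
  have hvb : ∀ y ∈ Metric.ball (0 : ℝ) 3, ∀ j, ‖v j * y ^ j‖ ≤ |v j| * 4 ^ (j + 1) := by
    intro y hy j
    rw [Real.norm_eq_abs, abs_mul, abs_pow]
    refine mul_le_mul_of_nonneg_left ?_ (abs_nonneg _)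
    calc |y| ^ j ≤ 4 ^ j := pow_le_pow_left₀ (abs_nonneg _) ((hball y hy).trans (by norm_num)) j
      _ ≤ 4 ^ (j + 1) := pow_le_pow_right₀ (by norm_num) (by omega)
  have hVs : ∀ y ∈ Metric.ball (0 : ℝ) 3, Summable fun j => ‖v j * y ^ j‖ := fun y hy =>
    Summable.of_nonneg_of_le (fun _ => norm_nonneg _) (hvb y hy) hs
  let F : ℝ → ℝ := fun x => ∑' k, f k * x ^ k
  let B : ℝ → ℝ := fun x => ∑' j : ℕ, v j * x ^ (j + 1) / ((j : ℝ) + 1)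
  have hB : ∀ y ∈ Metric.ball (0 : ℝ) 3, HasDerivAt B (∑' j, v j * y ^ j) y := by
    intro y hy
    refine hasDerivAt_tsum_of_isPreconnected (g' := fun j y => v j * y ^ j) hs Metric.isOpen_ball
      (convex_ball (0 : ℝ) 3).isPreconnected ?_ (fun n y hy => hvb y hy n) hmem0 ?_ hy
    · intro n z _
      have := ((hasDerivAt_pow (n + 1) z).const_mul (v n)).div_const ((n : ℝ) + 1)
      refine this.congr_deriv ?_
      have : (n : ℝ) + 1 ≠ 0 := by positivity
      push_cast
      field_simp
    · simp
  have hF : ∀ y ∈ Metric.ball (0 : ℝ) 3, HasDerivAt F ((∑' k, f k * y ^ k) * (∑' j, v j * y ^ j)) y := by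
    intro y hy
    have hu : Summable fun k : ℕ => M * ((k : ℝ) ^ 1 * (3 / 4 : ℝ) ^ k) :=
      (summable_pow_mul_geometric_of_norm_lt_one 1 (by norm_num)).mul_left M
    have hbd : ∀ (n : ℕ), ∀ z ∈ Metric.ball (0 : ℝ) 3,
        ‖f n * ((n : ℝ) * z ^ (n - 1))‖ ≤ M * ((n : ℝ) ^ 1 * (3 / 4 : ℝ) ^ n) := by
      intro n z hz
      rw [Real.norm_eq_abs, abs_mul, abs_mul, abs_pow, Nat.abs_cast]
      have h1 : |z| ^ (n - 1) ≤ 3 ^ n :=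
        (pow_le_pow_left₀ (abs_nonneg _) (hball z hz) _).trans
          (pow_le_pow_right₀ (by norm_num) (by omega))
      calc |f n| * ((n : ℝ) * |z| ^ (n - 1)) ≤ |f n| * ((n : ℝ) * 3 ^ n) := by gcongr
        _ = (n : ℝ) * (|f n| * 3 ^ n) := by ring
        _ ≤ (n : ℝ) * (M * (3 / 4) ^ n) := by exact mul_le_mul_of_nonneg_left (hb' n) (by positivity)
        _ = _ := by ring
    have h1 : HasDerivAt F (∑' n : ℕ, f n * ((n : ℝ) * y ^ (n - 1))) y := by
      refine hasDerivAt_tsum_of_isPreconnected (g' := fun n y => f n * ((n : ℝ) * y ^ (n - 1))) hu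
        Metric.isOpen_ball (convex_ball (0 : ℝ) 3).isPreconnected ?_ hbd hmem0
        (hFs 0 hmem0).of_norm hy
      intro n z _
      exact (hasDerivAt_pow n z).const_mul (f n)
    refine h1.congr_deriv (Eq.symm ?_)
    rw [(Summable.of_norm_bounded hu (fun n => hbd n y hy)).tsum_eq_zero_add,
      tsum_mul_tsum_eq_tsum_sum_antidiagonal_of_summable_norm (hFs y hy) (hVs y hy)]
    simp only [Nat.cast_zero, zero_mul, mul_zero, zero_add, Nat.add_sub_cancel]
    refine tsum_congr fun n => ?_
    push_cast
    rw [← mul_assoc, hf, Finset.sum_mul]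
    refine Finset.sum_congr rfl ?_
    rintro ⟨a, b⟩ hx
    have : a + b = n := Finset.HasAntidiagonal.mem_antidiagonal.1 hx
    subst this
    simp only; ring
  have hH : ∀ y ∈ Metric.ball (0 : ℝ) 3, HasDerivAt (fun x => F x * Real.exp (-B x)) 0 y := by
    intro y hy
    have := (hF y hy).mul ((hB y hy).neg.exp)
    refine this.congr_deriv ?_
    simp only [F]
    ring
  have hconst := IsOpen.is_const_of_deriv_eq_zero (f := fun x => F x * Real.exp (-B x))
    Metric.isOpen_ball (convex_ball (0 : ℝ) 3).isPreconnected
    (fun y hy => (hH y hy).differentiableAt.differentiableWithinAt)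
    (fun y hy => (hH y hy).deriv) (x := 2) (y := 0) (by simp; norm_num) hmem0
  have hF0 : F 0 = 1 := by
    simp only [F]
    rw [tsum_eq_single 0 (fun n hn => by simp [hn])]
    simp [h0]
  have hB0 : B 0 = 0 := by simp [B]
  simp only [hF0, hB0, neg_zero, Real.exp_zero, mul_one] at hconst
  rw [Real.exp_neg] at hconst
  have := Real.exp_pos (B 2)
  field_simp at hconst
  exact hconst

set_option maxHeartbeats 1000000 in
lemma ck_final (c f : ℕ → ℝ) (M η : ℝ) (hM : 0 ≤ M) (hb : ∀ k, |f k| * 4 ^ k ≤ M)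
    (hc : ∀ k, c k = ∑ x ∈ Finset.HasAntidiagonal.antidiagonal k, f x.1 * (3 * (1 / 2) ^ x.2 - 2 * (1 / 3) ^ x.2))
    (hη : η = 3 * ∑' k, f k * 2 ^ k) :
    (fun k : ℕ => c k - η / (2 : ℝ) ^ k) =O[atTop] fun k : ℕ => ((3 : ℝ) ^ k)⁻¹ := by
  have hb' : ∀ k, |f k| * 3 ^ k ≤ M * (3 / 4) ^ k := by
    intro k
    calc |f k| * 3 ^ k = (|f k| * 4 ^ k) * (3 / 4) ^ k := by
          rw [mul_assoc, ← mul_pow]; norm_num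
      _ ≤ _ := mul_le_mul_of_nonneg_right (hb k) (by positivity)
  have hgeo : Summable fun k : ℕ => M * (3 / 4 : ℝ) ^ k :=
    (summable_geometric_of_lt_one (by norm_num) (by norm_num)).mul_left M
  have h3 : Summable fun k => |f k| * 3 ^ k :=
    Summable.of_nonneg_of_le (fun _ => by positivity) hb' hgeo
  have h2 : Summable fun k => f k * 2 ^ k := by
    refine Summable.of_norm_bounded h3 (fun k => ?_)
    rw [Real.norm_eq_abs, abs_mul, abs_pow]
    gcongr; norm_num
  set T := ∑' k, |f k| * 3 ^ k with hT
  refine IsBigO.of_bound (3 * T + 2 * T) (Eventually.of_forall fun k => ?_)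
  have e1 : c k = 3 * (∑ i ∈ Finset.range (k + 1), f i * 2 ^ i) / 2 ^ k
      - 2 * (∑ i ∈ Finset.range (k + 1), f i * 3 ^ i) / 3 ^ k := by
    rw [hc, Finset.Nat.sum_antidiagonal_eq_sum_range_succ_mk, Finset.mul_sum, Finset.mul_sum,
      Finset.sum_div, Finset.sum_div, ← Finset.sum_sub_distrib]
    refine Finset.sum_congr rfl fun i hi => ?_
    obtain ⟨d, rfl⟩ : ∃ d, k = i + d := ⟨k - i, by have := Finset.mem_range.1 hi; omega⟩
    simp only [Nat.add_sub_cancel_left, one_div, inv_pow, pow_add]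
    field_simp
  have e2 := h2.sum_add_tsum_nat_add (k + 1)
  have e3 : c k - η / 2 ^ k = -(3 * (∑' i, f (i + (k + 1)) * 2 ^ (i + (k + 1))) / 2 ^ k)
      - 2 * (∑ i ∈ Finset.range (k + 1), f i * 3 ^ i) / 3 ^ k := by
    rw [e1, hη, ← e2]; ring
  have b1 : |∑ i ∈ Finset.range (k + 1), f i * 3 ^ i| ≤ T := by
    refine (Finset.abs_sum_le_sum_abs _ _).trans ?_
    simp only [abs_mul, abs_pow]
    norm_num
    exact h3.sum_le_tsum _ (fun i _ => by positivity)
  have hs3 : Summable fun i => |f (i + (k + 1))| * 3 ^ (i + (k + 1)) :=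
    (summable_nat_add_iff (k + 1)).2 h3
  have b2 : |∑' i, f (i + (k + 1)) * 2 ^ (i + (k + 1))| ≤ T * (2 / 3) ^ k := by
    have : ‖∑' i, f (i + (k + 1)) * 2 ^ (i + (k + 1))‖
        ≤ ∑' i, (|f (i + (k + 1))| * 3 ^ (i + (k + 1))) * (2 / 3) ^ k := by
      refine tsum_of_norm_bounded (hs3.mul_right _).hasSum fun i => ?_
      rw [Real.norm_eq_abs, abs_mul, abs_pow, abs_two, mul_assoc]
      refine mul_le_mul_of_nonneg_left ?_ (abs_nonneg _)
      calc (2 : ℝ) ^ (i + (k + 1)) = 3 ^ (i + (k + 1)) * (2 / 3) ^ (i + (k + 1)) := by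
            rw [← mul_pow]; norm_num
        _ ≤ _ := mul_le_mul_of_nonneg_left
            (pow_le_pow_of_le_one (by norm_num) (by norm_num) (by omega)) (by positivity)
    rw [Real.norm_eq_abs, tsum_mul_right] at this
    refine this.trans (mul_le_mul_of_nonneg_right ?_ (by positivity))
    have e4 := h3.sum_add_tsum_nat_add (k + 1)
    have : 0 ≤ ∑ i ∈ Finset.range (k + 1), |f i| * 3 ^ i :=
      Finset.sum_nonneg fun i _ => by positivity
    linarith
  rw [e3, Real.norm_eq_abs, Real.norm_eq_abs, abs_of_pos (by positivity : (0 : ℝ) < (3 ^ k)⁻¹)]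
  refine (abs_sub _ _).trans ?_
  rw [abs_neg, abs_div, abs_div, abs_mul, abs_mul, abs_of_pos (by positivity : (0 : ℝ) < 3 ^ k),
    abs_of_pos (by positivity : (0 : ℝ) < 2 ^ k), abs_of_pos (by positivity : (0 : ℝ) < 3), abs_two]
  have b3 : 3 * |∑' i, f (i + (k + 1)) * 2 ^ (i + (k + 1))| / 2 ^ k ≤ 3 * T * (3 ^ k)⁻¹ := by
    calc _ ≤ 3 * (T * (2 / 3) ^ k) / 2 ^ k := by gcongr
      _ = _ := by rw [div_pow]; field_simp
  have b4 : 2 * |∑ i ∈ Finset.range (k + 1), f i * 3 ^ i| / 3 ^ k ≤ 2 * T * (3 ^ k)⁻¹ := by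
    rw [div_eq_mul_inv]; gcongr
  linarith

noncomputable def ckL (p : ℕ) : ℝ :=
  -Real.log (1 - 2 / (p : ℝ)) - 2 / (p : ℝ)

noncomputable def ckW (p : Nat.Primes) (j : ℕ) : ℝ :=
  if 5 ≤ (p : ℕ) then (1 / ((p : ℕ) : ℝ)) ^ (j + 2) else 0

noncomputable def ckV : ℕ → ℝ
  | 0 => -5 / 6
  | j + 1 => ∑' p : Nat.Primes, ckW p j

lemma ck_sum_primes (j : ℕ) : Summable fun p : Nat.Primes => (1 / ((p : ℕ) : ℝ)) ^ (j + 2) := by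
  have h := (Nat.Primes.summable_rpow (r := -((j + 2 : ℕ) : ℝ))).2 (by push_cast; linarith [(Nat.cast_nonneg j : (0:ℝ) ≤ j)])
  refine h.congr fun p => ?_
  rw [Real.rpow_neg (by positivity), Real.rpow_natCast, one_div, inv_pow]

lemma ckW_nonneg (p : Nat.Primes) (j : ℕ) : 0 ≤ ckW p j := by
  unfold ckW; split_ifs <;> positivity

lemma ckW_le (p : Nat.Primes) (j : ℕ) : ckW p j ≤ (1 / ((p : ℕ) : ℝ)) ^ (j + 2) := by
  unfold ckW; split_ifs
  · exact le_rfl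
  · positivity

lemma ckW_summable (j : ℕ) : Summable fun p : Nat.Primes => ckW p j :=
  Summable.of_nonneg_of_le (fun p => ckW_nonneg p j) (fun p => ckW_le p j) (ck_sum_primes j)

lemma ck_prime_cases (p : Nat.Primes) : (p : ℕ) = 2 ∨ (p : ℕ) = 3 ∨ 5 ≤ (p : ℕ) := by
  have h2 := p.2.two_le
  by_cases h4 : (p : ℕ) = 4
  · have := p.2
    rw [h4] at this
    exact absurd this (by norm_num)
  · omega

lemma ck_single (q : ℕ) (hq : q.Prime) (a : ℝ) :
    HasSum (fun p : Nat.Primes => if (p : ℕ) = q then a else 0) a := by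
  have h := hasSum_single (f := fun p : Nat.Primes => if (p : ℕ) = q then a else 0) ⟨q, hq⟩
    (fun b hb => if_neg fun h => hb (Subtype.ext h))
  simpa using h

lemma ckZ (j : ℕ) (hj : 1 ≤ j) : Zp (j + 1) = ckV j + (1 / 2) ^ (j + 1) + (1 / 3) ^ (j + 1) := by
  obtain ⟨i, rfl⟩ : ∃ i, j = i + 1 := ⟨j - 1, by omega⟩
  have h2 := ck_single 2 Nat.prime_two ((1 / 2 : ℝ) ^ (i + 2))
  have h3 := ck_single 3 Nat.prime_three ((1 / 3 : ℝ) ^ (i + 2))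
  have h := ((ckW_summable i).hasSum.add h2).add h3
  refine Eq.trans ?_ h.tsum_eq
  unfold Zp
  refine tsum_congr fun p => ?_
  rcases ck_prime_cases p with hp | hp | hp
  · simp [ckW, hp]
  · simp [ckW, hp]
  · have n2 : (p : ℕ) ≠ 2 := by omega
    have n3 : (p : ℕ) ≠ 3 := by omega
    simp [ckW, n2, n3, hp]

lemma ckU : Summable (Function.uncurry fun (p : Nat.Primes) (j : ℕ) => ckW p j * 4 ^ (j + 2)) := by
  have hg : Summable fun j : ℕ => (4 / 5 : ℝ) ^ j :=
    summable_geometric_of_lt_one (by norm_num) (by norm_num)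
  have h := ((ck_sum_primes 0).mul_left 16).mul_of_nonneg hg
    (fun p => by positivity) (fun j => by positivity)
  refine Summable.of_nonneg_of_le ?_ ?_ h
  · rintro ⟨p, j⟩
    exact mul_nonneg (ckW_nonneg p j) (by positivity)
  · rintro ⟨p, j⟩
    simp only [Function.uncurry]
    unfold ckW
    split_ifs with hp
    · have hp' : (5 : ℝ) ≤ ((p : ℕ) : ℝ) := by exact_mod_cast hp
      have e : (1 / ((p : ℕ) : ℝ)) ^ (j + 2) * 4 ^ (j + 2)
          = 16 * (1 / ((p : ℕ) : ℝ)) ^ (0 + 2) * (4 / ((p : ℕ) : ℝ)) ^ j := by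
        rw [div_pow, div_pow, div_pow]; field_simp; ring
      rw [e]
      gcongr
    · rw [zero_mul]; positivity

lemma ckV_summable : Summable fun j => |ckV j| * 4 ^ (j + 1) := by
  rw [← summable_nat_add_iff 1]
  refine ckU.prod_symm.prod.congr fun j => ?_
  rw [ckV, abs_of_nonneg (tsum_nonneg fun p => ckW_nonneg p j), ← tsum_mul_right]
  rfl

lemma ckL_hasSum (p : Nat.Primes) :
    HasSum (fun j : ℕ => ckW p j * 2 ^ (j + 2) / ((j : ℝ) + 2)) (if 5 ≤ (p : ℕ) then ckL p else 0) := by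
  by_cases hp : 5 ≤ (p : ℕ)
  · have hp' : (5 : ℝ) ≤ ((p : ℕ) : ℝ) := by exact_mod_cast hp
    have hx : |2 / ((p : ℕ) : ℝ)| < 1 := by
      rw [abs_of_nonneg (by positivity), div_lt_one (by linarith)]; linarith
    have h := Real.hasSum_pow_div_log_of_abs_lt_one hx
    rw [← hasSum_nat_add_iff' 1] at h
    simp only [ckW, hp, if_true, ckL]
    have e1 : (fun j : ℕ => (1 / ((p : ℕ) : ℝ)) ^ (j + 2) * 2 ^ (j + 2) / ((j : ℝ) + 2))
        = fun j : ℕ => (2 / ((p : ℕ) : ℝ)) ^ (j + 1 + 1) / (((j + 1 : ℕ) : ℝ) + 1) := by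
      funext j
      rw [← mul_pow]
      push_cast
      congr 1
      · congr 1; ring
      · ring
    rw [e1]
    simpa using h
  · simp only [ckW, hp, if_false, zero_mul, zero_div]
    exact hasSum_zero

lemma ckU2 : Summable (Function.uncurry fun (p : Nat.Primes) (j : ℕ) =>
    ckW p j * 2 ^ (j + 2) / ((j : ℝ) + 2)) := by
  refine Summable.of_nonneg_of_le ?_ ?_ ckU
  · rintro ⟨p, j⟩
    exact div_nonneg (mul_nonneg (ckW_nonneg p j) (by positivity)) (by positivity)
  · rintro ⟨p, j⟩
    simp only [Function.uncurry]
    have h0 := ckW_nonneg p j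
    refine (div_le_self (by positivity) (by linarith [(Nat.cast_nonneg j : (0:ℝ) ≤ j)])).trans ?_
    gcongr
    norm_num

lemma ckL_summable : Summable fun p : Nat.Primes => if 5 ≤ (p : ℕ) then ckL p else 0 :=
  ckU2.prod.congr fun p => (ckL_hasSum p).tsum_eq

lemma ckV_tsum : ∑' j : ℕ, ckV j * 2 ^ (j + 1) / ((j : ℝ) + 1)
    = -5 / 3 + ∑' p : Nat.Primes, if 5 ≤ (p : ℕ) then ckL p else 0 := by
  have hs : Summable fun j : ℕ => ckV j * 2 ^ (j + 1) / ((j : ℝ) + 1) := by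
    refine Summable.of_norm_bounded ckV_summable fun j => ?_
    rw [Real.norm_eq_abs, abs_div, abs_mul, abs_pow, abs_two,
      abs_of_pos (by positivity : (0 : ℝ) < (j : ℝ) + 1)]
    refine (div_le_self (by positivity) (by linarith [(Nat.cast_nonneg j : (0:ℝ) ≤ j)])).trans ?_
    gcongr
    norm_num
  rw [hs.tsum_eq_zero_add]
  congr 1
  · simp [ckV]; norm_num
  · rw [tsum_congr fun p => (ckL_hasSum p).tsum_eq.symm, ← ckU2.tsum_comm]
    refine tsum_congr fun j => ?_
    rw [ckV, ← tsum_mul_right, ← tsum_div_const]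
    refine tsum_congr fun p => ?_
    push_cast
    congr 1
    ring

lemma ck_eta : Real.exp (-1) * ∏' p : {p : Nat.Primes // 2 < (p : ℕ)},
        (1 - 2 / ((p.1 : ℕ) : ℝ))⁻¹ * Real.exp (-2 / ((p.1 : ℕ) : ℝ))
    = 3 * Real.exp (-5 / 3 + ∑' p : Nat.Primes, if 5 ≤ (p : ℕ) then ckL p else 0) := by
  set T := ∑' p : Nat.Primes, if 5 ≤ (p : ℕ) then ckL p else 0 with hT
  have h3 := ck_single 3 Nat.prime_three (ckL 3)
  have h := ckL_summable.hasSum.add h3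
  have hsub : HasSum (fun p : {p : Nat.Primes // 2 < (p : ℕ)} => ckL p.1) (T + ckL 3) := by
    have : HasSum ((fun p : Nat.Primes => ckL p) ∘
        ((↑) : {p : Nat.Primes | 2 < (p : ℕ)} → Nat.Primes)) (T + ckL 3) := by
      rw [hasSum_subtype_iff_indicator]
      suffices hfun : Set.indicator {p : Nat.Primes | 2 < (p : ℕ)} (fun p : Nat.Primes => ckL p)
          = fun b : Nat.Primes => (if 5 ≤ (b : ℕ) then ckL b else 0)
            + if (b : ℕ) = 3 then ckL 3 else 0 by
        rw [hfun]; exact h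
      funext p
      rw [Set.indicator_apply]
      rcases ck_prime_cases p with hp | hp | hp
      · simp [hp]
      · simp [hp]
      · have n3 : (p : ℕ) ≠ 3 := by omega
        have : 2 < (p : ℕ) := by omega
        simp [n3, hp, this]
    exact this
  have hprod := hsub.rexp.tprod_eq
  have e : ∏' p : {p : Nat.Primes // 2 < (p : ℕ)},
        (1 - 2 / ((p.1 : ℕ) : ℝ))⁻¹ * Real.exp (-2 / ((p.1 : ℕ) : ℝ))
      = Real.exp (T + ckL 3) := by
    rw [← hprod]
    refine tprod_congr fun p => ?_
    have hp : (2 : ℝ) < ((p.1 : ℕ) : ℝ) := by exact_mod_cast p.2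
    have hpos : 0 < 1 - 2 / ((p.1 : ℕ) : ℝ) := by
      rw [sub_pos, div_lt_one (by linarith)]; exact hp
    simp only [Function.comp, ckL]
    rw [sub_eq_add_neg (-Real.log _), Real.exp_add, Real.exp_neg (Real.log _), Real.exp_log hpos, neg_div]
  have e3 : Real.exp (ckL 3) = 3 * Real.exp (-2 / 3) := by
    simp only [ckL]
    rw [sub_eq_add_neg (-Real.log _), Real.exp_add, Real.exp_neg (Real.log _), Real.exp_log (by norm_num), ← neg_div]
    norm_num
  rw [e, Real.exp_add, e3]
  have : (-5 / 3 + T : ℝ) = -1 + (-2 / 3) + T := by ring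
  rw [this, Real.exp_add, Real.exp_add]
  ring

theorem ck_asymptotic (c : ℕ → ℝ) (hc0 : c 0 = 1)
    (hc : ∀ k, 1 ≤ k → c k = (1 / (k : ℝ)) * ∑ j ∈ Finset.Icc 2 k, c (k - j) * Zp j)
    (η : ℝ)
    (hη : η = Real.exp (-1) * ∏' p : {p : Nat.Primes // 2 < (p : ℕ)},
        (1 - 2 / ((p.1 : ℕ) : ℝ))⁻¹ * Real.exp (-2 / ((p.1 : ℕ) : ℝ))) :
    (fun k : ℕ => c k - η / (2 : ℝ) ^ k) =O[atTop] fun k : ℕ => ((3 : ℝ) ^ k)⁻¹ := by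
  obtain ⟨f, hf0, hf, hcf⟩ := ck_algebra c ckV Zp hc0 hc rfl ckZ
  obtain ⟨M, hM, hb⟩ := ck_bound f ckV hf ckV_summable
  refine ck_final c f M η hM hb hcf ?_
  rw [ck_exp f ckV hf0 hf ckV_summable M hM hb, ckV_tsum, hη, ck_eta]
end

section
/- For every prime q, c_k = ∑_{p < q, p prime} α_p p^{-k} + O_q(q^{-k}) as k → ∞, where α_p = e^{-1} ∏_{q' ≠ p, q' prime} (1 - p/q')^{-1} e^{-p/q'}. -/
open Filter Real Asymptotics
open scoped Classical Topology BigOperators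

noncomputable def Eser (a : ℝ) : PowerSeries ℝ := PowerSeries.mk fun j => if j = 0 then 0 else a ^ j

lemma Eser_mul (a : ℝ) : (1 - PowerSeries.C a * PowerSeries.X) * Eser a
    = PowerSeries.C a * PowerSeries.X := by
  ext n
  rcases n with _ | n
  · simp [sub_mul, mul_assoc, Eser]
  · rw [sub_mul, one_mul, map_sub, mul_assoc, PowerSeries.coeff_C_mul, PowerSeries.coeff_succ_X_mul,
      PowerSeries.coeff_C_mul, PowerSeries.coeff_X]
    rcases n with _ | n
    · simp [Eser]
    · simp [Eser]; ring

lemma ode_mul (S : Finset ℕ) (f : ℕ → ℝ) (c Z : PowerSeries ℝ)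
    (h : PowerSeries.X * PowerSeries.derivative ℝ c = c * Z) :
    PowerSeries.X * PowerSeries.derivative ℝ
      (c * ∏ p ∈ S, (1 - PowerSeries.C (f p) * PowerSeries.X))
      = (c * ∏ p ∈ S, (1 - PowerSeries.C (f p) * PowerSeries.X)) * (Z - ∑ p ∈ S, Eser (f p)) := by
  induction S using Finset.induction_on with
  | empty => simpa using h
  | insert a s ha ih =>
    rw [Finset.prod_insert ha, Finset.sum_insert ha]
    set P := ∏ p ∈ s, (1 - PowerSeries.C (f p) * PowerSeries.X)
    have e := Eser_mul (f a)
    have : c * ((1 - PowerSeries.C (f a) * PowerSeries.X) * P) =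
      (1 - PowerSeries.C (f a) * PowerSeries.X) * (c * P) := by ring
    rw [this, Derivation.leibniz, smul_eq_mul, smul_eq_mul]
    have d : PowerSeries.derivative ℝ (1 - PowerSeries.C (f a) * PowerSeries.X)
        = - PowerSeries.C (f a) := by
      rw [map_sub, Derivation.leibniz]
      simp [PowerSeries.derivative_C, PowerSeries.derivative_X]
    rw [d]
    linear_combination (1 - PowerSeries.C (f a) * PowerSeries.X) * ih + (c * P) * e

lemma bdd_of_rec_s15 (h B : ℕ → ℝ) (ρ : ℝ) (hρ : 0 < ρ) (hB0 : B 0 = 0)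
    (hB : Summable fun j => |B j| * ρ ^ j)
    (hrec : ∀ k : ℕ, (k : ℝ) * h k = ∑ x ∈ Finset.HasAntidiagonal.antidiagonal k, h x.1 * B x.2) :
    ∃ C, 0 ≤ C ∧ ∀ k, |h k| * ρ ^ k ≤ C := by
  obtain ⟨N, hN⟩ := exists_nat_ge (∑' j, |B j| * ρ ^ j)
  have hpos : ∀ k, 0 ≤ |h k| * ρ ^ k := fun k => by positivity
  have hC : 0 ≤ ∑ i ∈ Finset.range (N+1), |h i| * ρ ^ i := Finset.sum_nonneg fun i _ => hpos i
  refine ⟨∑ i ∈ Finset.range (N+1), |h i| * ρ ^ i, hC, ?_⟩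
  set C := ∑ i ∈ Finset.range (N+1), |h i| * ρ ^ i
  intro k
  induction k using Nat.strong_induction_on with
  | _ k ih =>
  by_cases hk : k < N + 1
  · exact Finset.single_le_sum (f := fun i => |h i| * ρ ^ i) (fun i _ => hpos i)
      (Finset.mem_range.2 hk)
  · have hk' : (N : ℝ) ≤ k := by exact_mod_cast (by omega : N ≤ k)
    have hk0 : (0 : ℝ) < k := by exact_mod_cast (by omega : 0 < k)
    have h1 : (k : ℝ) * (|h k| * ρ ^ k) ≤
        ∑ x ∈ Finset.HasAntidiagonal.antidiagonal k, C * (|B x.2| * ρ ^ x.2) := by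
      have : (k : ℝ) * (|h k| * ρ ^ k) = |(k : ℝ) * h k| * ρ ^ k := by
        rw [abs_mul, abs_of_pos hk0]; ring
      rw [this, hrec]
      refine (mul_le_mul_of_nonneg_right (Finset.abs_sum_le_sum_abs _ _) (by positivity)).trans ?_
      rw [Finset.sum_mul]
      refine Finset.sum_le_sum fun x hx => ?_
      rw [Finset.HasAntidiagonal.mem_antidiagonal] at hx
      by_cases hx2 : x.2 = 0
      · simp [hx2, hB0]
      · have := ih x.1 (by omega)
        calc |h x.1 * B x.2| * ρ ^ k = (|h x.1| * ρ ^ x.1) * (|B x.2| * ρ ^ x.2) := by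
              rw [abs_mul, ← hx, pow_add]; ring
          _ ≤ _ := mul_le_mul_of_nonneg_right this (by positivity)
    have h2 : ∑ x ∈ Finset.HasAntidiagonal.antidiagonal k, (|B x.2| * ρ ^ x.2) ≤ k := by
      refine le_trans ?_ (hN.trans hk')
      rw [Finset.Nat.sum_antidiagonal_eq_sum_range_succ_mk]
      dsimp only
      have := Finset.sum_range_reflect (fun j => |B j| * ρ ^ j) (k+1)
      simp only [Nat.add_sub_cancel] at this
      rw [this]
      exact hB.sum_le_tsum _ (fun i _ => by positivity)
    rw [← Finset.mul_sum] at h1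
    have := h1.trans (mul_le_mul_of_nonneg_left h2 hC)
    rw [mul_comm C] at this
    exact le_of_mul_le_mul_left this hk0

lemma summable_pow_of_bdd {a : ℕ → ℝ} {ρ C x : ℝ} (hρ : 0 < ρ)
    (ha : ∀ k, |a k| * ρ ^ k ≤ C) (hx : |x| < ρ) : Summable fun k : ℕ => |a k * x ^ k| := by
  refine Summable.of_nonneg_of_le (fun k => abs_nonneg _) (fun k => ?_)
    ((summable_geometric_of_lt_one (r := |x| / ρ) (by positivity)
      ((div_lt_one hρ).2 hx)).mul_left C)
  have : |a k * x ^ k| = (|a k| * ρ ^ k) * (|x| / ρ) ^ k := by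
    rw [abs_mul, abs_pow, div_pow]; field_simp
  rw [this]
  exact mul_le_mul_of_nonneg_right (ha k) (by positivity)

lemma hasDerivAt_ps {a : ℕ → ℝ} {ρ C x : ℝ} (hρ : 0 < ρ)
    (ha : ∀ k, |a k| * ρ ^ k ≤ C) (hx : |x| < ρ) :
    HasDerivAt (fun y => ∑' k, a k * y ^ k) (∑' k : ℕ, a k * (k * x ^ (k-1))) x := by
  obtain ⟨r, hxr, hrρ⟩ := exists_between hx
  have hr0 : 0 < r := (abs_nonneg x).trans_lt hxr
  have hu : Summable fun k : ℕ => C / r * ((k : ℝ) ^ 1 * (r / ρ) ^ k) := by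
    have hlt : ‖r / ρ‖ < 1 := by
      rw [Real.norm_of_nonneg (by positivity)]
      exact (div_lt_one hρ).2 hrρ
    have := summable_pow_mul_geometric_of_norm_lt_one (R := ℝ) 1 hlt
    exact this.mul_left _
  refine hasDerivAt_tsum_of_isPreconnected (g := fun (k : ℕ) (y : ℝ) => a k * y ^ k)
    (g' := fun (k : ℕ) (y : ℝ) => a k * (k * y ^ (k-1))) hu (t := Metric.ball (0 : ℝ) r) (y₀ := 0)
    Metric.isOpen_ball (convex_ball _ _).isPreconnected ?_ ?_ ?_ ?_ ?_
  · intro n y _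
    exact (hasDerivAt_pow n y).const_mul _
  · intro n y hy
    rw [mem_ball_zero_iff, Real.norm_eq_abs] at hy
    rcases n with _ | n
    · simp
    · rw [Real.norm_eq_abs, abs_mul, abs_mul, abs_pow, Nat.abs_cast, Nat.add_sub_cancel]
      have h1 : C / r * (((n+1 : ℕ) : ℝ) ^ 1 * (r / ρ) ^ (n+1))
        = (C * ((ρ ^ (n+1))⁻¹)) * (((n+1 : ℕ) : ℝ) * r ^ n) := by
        rw [div_pow, pow_succ r n]; field_simp
      rw [h1]
      have h2 : |a (n+1)| ≤ C * (ρ ^ (n+1))⁻¹ := by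
        rw [← div_eq_mul_inv, le_div_iff₀ (by positivity)]; exact ha _
      gcongr
      exact (abs_nonneg _).trans h2
  · simpa using hr0
  · exact (summable_pow_of_bdd hρ ha (by simpa using hρ)).of_abs
  · simpa using hxr

lemma H_eq_exp (h B : ℕ → ℝ) (ρ C D : ℝ) (hρ : 0 < ρ) (hB0 : B 0 = 0) (h0 : h 0 = 1)
    (hC : ∀ k, |h k| * ρ ^ k ≤ C) (hD : ∀ k, |B k| * ρ ^ k ≤ D)
    (hrec : ∀ k : ℕ, (k : ℝ) * h k = ∑ x ∈ Finset.HasAntidiagonal.antidiagonal k, h x.1 * B x.2)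
    (x : ℝ) (hx0 : 0 < x) (hx : x < ρ) :
    ∑' k, h k * x ^ k = Real.exp (∑' k, B k / k * x ^ k) := by
  have hD' : ∀ k : ℕ, |B k / k| * ρ ^ k ≤ D := by
    intro k
    refine le_trans (mul_le_mul_of_nonneg_right ?_ (by positivity)) (hD k)
    rcases k with _ | k
    · simp
    · rw [abs_div, Nat.abs_cast]
      exact div_le_self (abs_nonneg _) (by simp)
  set H : ℝ → ℝ := fun y => ∑' k, h k * y ^ k with hH
  set L : ℝ → ℝ := fun y => ∑' k, B k / k * y ^ k with hL
  set H' : ℝ → ℝ := fun y => ∑' k : ℕ, h k * (k * y ^ (k-1)) with hH'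
  set L' : ℝ → ℝ := fun y => ∑' k : ℕ, B k / k * (k * y ^ (k-1)) with hL'
  have dH : ∀ y, |y| < ρ → HasDerivAt H (H' y) y := fun y hy => hasDerivAt_ps hρ hC hy
  have dL : ∀ y, |y| < ρ → HasDerivAt L (L' y) y := fun y hy => hasDerivAt_ps hρ hD' hy
  have key : ∀ y, 0 < y → y < ρ → H' y = H y * L' y := by
    intro y hy0 hy
    change (∑' k : ℕ, h k * (k * y ^ (k-1))) = H y * ∑' k : ℕ, B k / k * (k * y ^ (k-1))
    have hy' : |y| < ρ := by rwa [abs_of_pos hy0]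
    apply mul_left_cancel₀ hy0.ne'
    have e1 : y * ∑' k : ℕ, h k * (k * y ^ (k-1)) = ∑' k : ℕ, (k * h k) * y ^ k := by
      rw [← tsum_mul_left]; congr 1; ext k
      rcases k with _ | k
      · simp
      · rw [Nat.add_sub_cancel, pow_succ]; ring
    have e2 : y * ∑' k : ℕ, B k / k * (k * y ^ (k-1)) = ∑' k : ℕ, B k * y ^ k := by
      rw [← tsum_mul_left]; congr 1; ext k
      rcases k with _ | k
      · simp [hB0]
      · rw [Nat.add_sub_cancel, pow_succ]; field_simp
    rw [e1, mul_left_comm, e2, hH]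
    dsimp only
    have cau := tsum_mul_tsum_eq_tsum_sum_antidiagonal_of_summable_norm
      (f := fun k => h k * y ^ k) (g := fun k => B k * y ^ k)
      (by simpa only [Real.norm_eq_abs] using summable_pow_of_bdd hρ hC hy')
      (by simpa only [Real.norm_eq_abs] using summable_pow_of_bdd hρ hD hy')
    rw [cau]
    congr 1; ext k
    rw [hrec, Finset.sum_mul]
    refine Finset.sum_congr rfl fun z hz => ?_
    rw [Finset.HasAntidiagonal.mem_antidiagonal] at hz
    rw [← hz, pow_add]; ring
  have dF : ∀ y, |y| < ρ → HasDerivAt (fun y => H y * Real.exp (- L y))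
      (H' y * Real.exp (- L y) + H y * (Real.exp (- L y) * (- L' y))) y :=
    fun y hy => (dH y hy).mul (dL y hy).neg.exp
  obtain ⟨y, hy, hy'⟩ := exists_hasDerivAt_eq_slope (fun y => H y * Real.exp (- L y))
    (fun y => H' y * Real.exp (- L y) + H y * (Real.exp (- L y) * (- L' y))) hx0
    (fun y hy => (dF y (by rw [abs_of_nonneg hy.1]; exact hy.2.trans_lt hx)).continuousAt.continuousWithinAt)
    (fun y hy => dF y (by rw [abs_of_pos hy.1]; exact hy.2.trans hx))
  have hz : H x * Real.exp (- L x) - H 0 * Real.exp (- L 0) = 0 := by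
    have := key y hy.1 (hy.2.trans hx)
    rw [this] at hy'
    rw [eq_div_iff (by linarith)] at hy'
    linear_combination - hy'
  have H0 : H 0 = 1 := by
    rw [hH]; dsimp only
    rw [tsum_eq_single 0 (fun k hk => by simp [hk])]; simp [h0]
  have L0 : L 0 = 0 := by
    rw [hL]; dsimp only
    rw [tsum_eq_single 0 (fun k hk => by simp [hk])]; simp
  rw [H0, L0, Real.exp_neg] at hz
  have := Real.exp_pos (L x)
  change H x = Real.exp (L x)
  field_simp at hz
  simp at hz
  linarith

noncomputable def wq (q j : ℕ) : ℝ :=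
  ∑' r : Nat.Primes, if (r : ℕ) ≤ q then 0 else (1 : ℝ) / ((r : ℕ) : ℝ) ^ j

lemma summable_primes (j : ℕ) (hj : 2 ≤ j) :
    Summable fun r : Nat.Primes => (1 : ℝ) / ((r : ℕ) : ℝ) ^ j := by
  have : Summable fun n : ℕ => (1 : ℝ) / (n : ℝ) ^ j := Real.summable_one_div_nat_pow.2 hj
  exact this.comp_injective Nat.Primes.coe_nat_injective

lemma wterm_le (q j : ℕ) (r : Nat.Primes) :
    (if (r : ℕ) ≤ q then 0 else (1 : ℝ) / ((r : ℕ) : ℝ) ^ (j + 2)) ≤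
      (1 : ℝ) / ((r : ℕ) : ℝ) ^ 2 * (1 / (q + 1 : ℝ)) ^ j := by
  have hr : (0 : ℝ) < ((r : ℕ) : ℝ) := by exact_mod_cast r.2.pos
  split_ifs with h
  · positivity
  · have : (q + 1 : ℝ) ≤ ((r : ℕ) : ℝ) := by exact_mod_cast (by omega : q + 1 ≤ (r : ℕ))
    have e : (1 : ℝ) / ((r : ℕ) : ℝ) ^ (j + 2) =
      1 / ((r : ℕ) : ℝ) ^ 2 * (1 / ((r : ℕ) : ℝ)) ^ j := by
      rw [pow_add, one_div_pow]; field_simp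
    rw [e]
    gcongr

lemma wterm_nonneg (q j : ℕ) (r : Nat.Primes) :
    0 ≤ (if (r : ℕ) ≤ q then 0 else (1 : ℝ) / ((r : ℕ) : ℝ) ^ j) := by
  split_ifs <;> positivity

lemma wterm_summable (q j : ℕ) (hj : 2 ≤ j) :
    Summable fun r : Nat.Primes => if (r : ℕ) ≤ q then 0 else (1 : ℝ) / ((r : ℕ) : ℝ) ^ j := by
  refine Summable.of_nonneg_of_le (wterm_nonneg q j) (fun r => ?_) (summable_primes j hj)
  split_ifs
  · positivity
  · exact le_rfl

lemma wq_bound (q j : ℕ) :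
    |wq q (j + 2)| * (q + 1 : ℝ) ^ (j + 2) ≤
      (∑' r : Nat.Primes, (1 : ℝ) / ((r : ℕ) : ℝ) ^ 2) * (q + 1 : ℝ) ^ 2 := by
  have h0 : 0 ≤ wq q (j+2) := tsum_nonneg (wterm_nonneg q _)
  have h1 : wq q (j+2) ≤ (∑' r : Nat.Primes, (1 : ℝ) / ((r : ℕ) : ℝ) ^ 2) * (1 / (q + 1 : ℝ)) ^ j := by
    rw [← tsum_mul_right]
    exact Summable.tsum_le_tsum (wterm_le q j) (wterm_summable q _ (by omega))
      ((summable_primes 2 le_rfl).mul_right _)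
  rw [abs_of_nonneg h0]
  refine (mul_le_mul_of_nonneg_right h1 (by positivity)).trans (le_of_eq ?_)
  rw [one_div_pow, pow_add]
  have : (q + 1 : ℝ) ≠ 0 := by positivity
  field_simp

lemma Zp_sub (q j : ℕ) (hj : 2 ≤ j) :
    (∑' p : Nat.Primes, (1 : ℝ) / ((p : ℕ) : ℝ) ^ j) - ∑ p ∈ Nat.primesBelow (q+1), (1 / (p : ℝ)) ^ j
      = wq q j := by
  have h1 : HasSum (fun r : Nat.Primes => if (r : ℕ) ≤ q then (1 : ℝ) / ((r : ℕ) : ℝ) ^ j else 0)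
      (∑ p ∈ Nat.primesBelow (q+1), (1 / (p : ℝ)) ^ j) := by
    have := hasSum_sum_of_ne_finset_zero (L := .unconditional Nat.Primes)
      (s := (Nat.primesBelow (q+1)).subtype Nat.Prime)
      (f := (fun r : Nat.Primes => if (r : ℕ) ≤ q then (1 : ℝ) / ((r : ℕ) : ℝ) ^ j else 0)) (by
        intro b hb
        rw [if_neg]
        intro hbq
        apply hb
        exact Finset.mem_subtype.2 (Nat.mem_primesBelow.2 ⟨by omega, b.2⟩))
    convert this using 1
    refine Eq.trans ?_ (Finset.sum_subtype_of_mem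
      (fun r : ℕ => if r ≤ q then (1 : ℝ) / (r : ℝ) ^ j else 0) (fun x hx => (Nat.mem_primesBelow.1 hx).2)).symm
    refine Finset.sum_congr rfl fun p hp => ?_
    rw [if_pos (by have := (Nat.mem_primesBelow.1 hp).1; omega), one_div_pow]
  have h2 := (summable_primes j hj).hasSum.sub h1
  rw [wq]
  rw [← h2.tsum_eq]
  congr 1; ext r
  split_ifs <;> simp

lemma hasProd_w (q : ℕ) (x : ℝ) (hx0 : 0 < x) (hx : x ≤ q) :
    HasProd (fun r : Nat.Primes => if (r : ℕ) ≤ q then 1 else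
      (1 - x / ((r : ℕ) : ℝ))⁻¹ * Real.exp (-x / ((r : ℕ) : ℝ)))
      (Real.exp (∑' k : ℕ, wq q (k + 2) / ((k + 2 : ℕ) : ℝ) * x ^ (k + 2))) := by
  set f : Nat.Primes × ℕ → ℝ := fun z =>
    (if (z.1 : ℕ) ≤ q then 0 else (1 : ℝ) / ((z.1 : ℕ) : ℝ) ^ (z.2 + 2)) *
      (x ^ (z.2 + 2) / ((z.2 + 2 : ℕ) : ℝ)) with hf
  have hfs : Summable f := by
    have hg : Summable fun k : ℕ => x ^ 2 * (x / (q + 1)) ^ k :=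
      (summable_geometric_of_lt_one (by positivity)
        ((div_lt_one (by positivity)).2 (by linarith))).mul_left _
    refine Summable.of_nonneg_of_le (fun z => ?_) (fun z => ?_)
      ((summable_primes 2 le_rfl).mul_of_nonneg hg (fun r => by positivity) (fun k => by positivity))
    · exact mul_nonneg (wterm_nonneg _ _ _) (by positivity)
    · have h1 := wterm_le q z.2 z.1
      have h2 : x ^ (z.2 + 2) / ((z.2 + 2 : ℕ) : ℝ) ≤ x ^ (z.2 + 2) :=
        div_le_self (by positivity) (by exact_mod_cast (by omega : 1 ≤ z.2 + 2))
      refine (mul_le_mul h1 h2 (by positivity) (by positivity)).trans (le_of_eq ?_)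
      rw [one_div_pow, div_pow, pow_add]
      field_simp
  have h1 : HasSum (fun k : ℕ => wq q (k + 2) / ((k + 2 : ℕ) : ℝ) * x ^ (k + 2)) (∑' z, f z) := by
    have hs := (Equiv.prodComm ℕ Nat.Primes).hasSum_iff.2 hfs.hasSum
    refine HasSum.prod_fiberwise hs (fun k => ?_)
    have := (wterm_summable q (k+2) (by omega)).hasSum.mul_right (x ^ (k + 2) / ((k + 2 : ℕ) : ℝ))
    have e : wq q (k + 2) / ((k + 2 : ℕ) : ℝ) * x ^ (k + 2)
      = wq q (k + 2) * (x ^ (k + 2) / ((k + 2 : ℕ) : ℝ)) := by ring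
    rw [e]
    exact this
  have h2 : HasSum (fun r : Nat.Primes => if (r : ℕ) ≤ q then 0 else
      (-Real.log (1 - x / ((r : ℕ) : ℝ)) - x / ((r : ℕ) : ℝ))) (∑' z, f z) := by
    refine HasSum.prod_fiberwise hfs.hasSum (fun r => ?_)
    by_cases hr : (r : ℕ) ≤ q
    · simp [hf, hr, hasSum_zero]
    · simp only [hf, hr, if_false]
      have hr' : (q : ℝ) < ((r : ℕ) : ℝ) := by exact_mod_cast not_le.1 hr
      have hr0 : (0 : ℝ) < ((r : ℕ) : ℝ) := by exact_mod_cast r.2.pos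
      have hlt : |x / ((r : ℕ) : ℝ)| < 1 := by
        rw [abs_of_pos (by positivity), div_lt_one hr0]; linarith
      have := (hasSum_nat_add_iff' 1).2 (Real.hasSum_pow_div_log_of_abs_lt_one hlt)
      simp only [Finset.range_one, Finset.sum_singleton, zero_add, pow_one, Nat.cast_zero,
        div_one] at this
      refine Eq.mp (congrArg (fun F : ℕ → ℝ => HasSum F _) (funext fun k => ?_)) this
      symm
      rw [div_pow]
      push_cast
      have : (k : ℝ) + 1 + 1 = k + 2 := by ring
      rw [this]
      field_simp
  rw [h1.tsum_eq]
  convert h2.rexp using 2 with r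
  simp only [Function.comp]
  split_ifs with hr
  · simp
  · have hr' : (q : ℝ) < ((r : ℕ) : ℝ) := by exact_mod_cast not_le.1 hr
    have hr0 : (0 : ℝ) < ((r : ℕ) : ℝ) := by exact_mod_cast r.2.pos
    have hlt : x / ((r : ℕ) : ℝ) < 1 := by rw [div_lt_one hr0]; linarith
    rw [Real.exp_sub, Real.exp_neg, Real.exp_log (by linarith), neg_div, Real.exp_neg]
    rfl

noncomputable def Acoef (q p : ℕ) : ℝ :=
  ∏ r ∈ (Nat.primesBelow (q+1)).erase p, (1 - (p : ℝ) / (r : ℝ))⁻¹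

lemma alpha_eq (q p : ℕ) (hp : p.Prime) (hpq : p ≤ q) :
    Real.exp (-1) * ∏' r : {r : Nat.Primes // (r : ℕ) ≠ p},
        (1 - (p : ℝ) / ((r.1 : ℕ) : ℝ))⁻¹ * Real.exp (-(p : ℝ) / ((r.1 : ℕ) : ℝ)) =
    Acoef q p * Real.exp (-∑ r ∈ Nat.primesBelow (q+1), (p : ℝ) / r +
      ∑' k : ℕ, wq q (k + 2) / ((k + 2 : ℕ) : ℝ) * (p : ℝ) ^ (k + 2)) := by
  have hp0 : (0 : ℝ) < p := by exact_mod_cast hp.pos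
  have h2 := hasProd_w q p hp0 (by exact_mod_cast hpq)
  set g : ℕ → ℝ := fun r => (1 - (p : ℝ) / (r : ℝ))⁻¹ * Real.exp (-(p : ℝ) / (r : ℝ)) with hg
  have h1 : HasProd (fun r : Nat.Primes => if (r : ℕ) ≤ q ∧ (r : ℕ) ≠ p then g r else 1)
      (∏ r ∈ (Nat.primesBelow (q+1)).erase p, g r) := by
    have := hasProd_prod_of_ne_finset_one (L := .unconditional Nat.Primes)
      (s := ((Nat.primesBelow (q+1)).erase p).subtype Nat.Prime)
      (f := (fun r : Nat.Primes => if (r : ℕ) ≤ q ∧ (r : ℕ) ≠ p then g r else 1)) (by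
        intro b hb
        rw [if_neg]
        intro hbq
        apply hb
        exact Finset.mem_subtype.2 (Finset.mem_erase.2 ⟨hbq.2, Nat.mem_primesBelow.2 ⟨by omega, b.2⟩⟩))
    convert this using 1
    refine Eq.trans ?_ (Finset.prod_subtype_of_mem
      (fun r : ℕ => if r ≤ q ∧ r ≠ p then g r else 1)
      (fun x hx => (Nat.mem_primesBelow.1 (Finset.mem_of_mem_erase hx)).2)).symm
    refine Finset.prod_congr rfl fun r hr => ?_
    rw [Finset.mem_erase, Nat.mem_primesBelow] at hr
    rw [if_pos ⟨by omega, hr.1⟩]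
  have h3 := h1.mul h2
  have h4 : HasProd ((fun r : Nat.Primes => g r) ∘
      (Subtype.val : ({r : Nat.Primes | (r : ℕ) ≠ p} : Set Nat.Primes) → Nat.Primes))
      ((∏ r ∈ (Nat.primesBelow (q+1)).erase p, g r) *
      (Real.exp (∑' k : ℕ, wq q (k + 2) / ((k + 2 : ℕ) : ℝ) * (p : ℝ) ^ (k + 2)))) := by
    rw [hasProd_subtype_iff_mulIndicator]
    convert h3 using 2 with r
    rw [Set.mulIndicator_apply]
    simp only [Set.mem_ofPred_eq]
    by_cases h5 : (r : ℕ) = p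
    · simp [h5, hpq]
    · by_cases h6 : (r : ℕ) ≤ q
      · simp [h5, h6]
      · simp [h5, h6, hg]
  have h5 := h4.tprod_eq
  have h6 : ∏' r : {r : Nat.Primes // (r : ℕ) ≠ p},
        (1 - (p : ℝ) / ((r.1 : ℕ) : ℝ))⁻¹ * Real.exp (-(p : ℝ) / ((r.1 : ℕ) : ℝ)) = _ := h5
  rw [h6, hg, Finset.prod_mul_distrib, ← Real.exp_sum, Real.exp_add, Acoef]
  have hmem : p ∈ Nat.primesBelow (q+1) := Nat.mem_primesBelow.2 ⟨by omega, hp⟩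
  rw [← Finset.add_sum_erase _ _ hmem, div_self hp0.ne', neg_add, Real.exp_add]
  simp only [neg_div, Finset.sum_neg_distrib]
  ring

lemma partial_frac (S : Finset ℕ) (hS : S.Nonempty) (hS0 : ∀ p ∈ S, p ≠ 0) (h : PowerSeries ℝ)
    (c : PowerSeries ℝ)
    (hc : c * ∏ p ∈ S, (1 - PowerSeries.C (1 / (p : ℝ)) * PowerSeries.X) = h) :
    c = ∑ p ∈ S, PowerSeries.C (∏ r ∈ S.erase p, (1 - (p : ℝ) / (r : ℝ))⁻¹) *
      (h * PowerSeries.mk fun j => (1 / (p : ℝ)) ^ j) := by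
  have hL := Lagrange.sum_basis (F := ℝ) (s := S) (v := fun n : ℕ => (n : ℝ))
    (Nat.cast_injective.injOn) hS
  have hL' := congrArg (fun P : Polynomial ℝ => (P : PowerSeries ℝ)) hL
  simp only [Polynomial.coe_one] at hL'
  have hgeom : ∀ p : ℕ, (1 - PowerSeries.C (1 / (p : ℝ)) * PowerSeries.X) *
      (PowerSeries.mk fun j => (1 / (p : ℝ)) ^ j) = 1 := by
    intro p
    ext n
    rcases n with _ | n
    · simp [sub_mul, mul_assoc]
    · rw [sub_mul, one_mul, map_sub, mul_assoc, PowerSeries.coeff_C_mul,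
        PowerSeries.coeff_succ_X_mul]
      simp [pow_succ]
      try ring
  have hb : ∀ p ∈ S, ((Lagrange.basis S (fun n : ℕ => (n : ℝ)) p : Polynomial ℝ) : PowerSeries ℝ)
      = PowerSeries.C (∏ r ∈ S.erase p, (1 - (p : ℝ) / (r : ℝ))⁻¹) *
        ∏ r ∈ S.erase p, (1 - PowerSeries.C (1 / (r : ℝ)) * PowerSeries.X) := by
    intro p hp
    rw [Lagrange.basis, map_prod, ← Finset.prod_mul_distrib, ← Polynomial.coeToPowerSeries.ringHom_apply,
      map_prod]
    refine Finset.prod_congr rfl fun r hr => ?_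
    rw [Finset.mem_erase] at hr
    have hr0 : (r : ℝ) ≠ 0 := by exact_mod_cast hS0 r hr.2
    have hne : (p : ℝ) - r ≠ 0 := by
      rw [sub_ne_zero]; exact_mod_cast hr.1.symm
    have hne' : (r : ℝ) - p ≠ 0 := by
      rw [sub_ne_zero]; exact_mod_cast hr.1
    have e1 : ((p : ℝ) - r)⁻¹ = - ((1 - (p : ℝ) / (r : ℝ))⁻¹ * (1 / (r : ℝ))) := by
      have : (1 - (p : ℝ) / (r : ℝ)) = (r - p) / r := by field_simp
      rw [this, inv_div]
      field_simp
      ring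
    have e2 : PowerSeries.C (1 / (r : ℝ)) * PowerSeries.C (r : ℝ) = 1 := by
      rw [← map_mul, one_div, inv_mul_cancel₀ hr0, map_one]
    rw [Polynomial.coeToPowerSeries.ringHom_apply, Lagrange.basisDivisor, Polynomial.coe_mul,
      Polynomial.coe_C, Polynomial.coe_sub, Polynomial.coe_X, Polynomial.coe_C, e1, map_neg, map_mul]
    linear_combination PowerSeries.C ((1 - (p : ℝ) / (r : ℝ))⁻¹) * e2
  have hsum : ∑ p ∈ S, ((Lagrange.basis S (fun n : ℕ => (n : ℝ)) p : Polynomial ℝ) : PowerSeries ℝ)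
      = 1 := by
    rw [← hL']
    simp only [← Polynomial.coeToPowerSeries.ringHom_apply, map_sum]
  calc c = c * ∑ p ∈ S, ((Lagrange.basis S (fun n : ℕ => (n : ℝ)) p : Polynomial ℝ) : PowerSeries ℝ) := by
        rw [hsum, mul_one]
    _ = _ := by
        rw [Finset.mul_sum]
        refine Finset.sum_congr rfl fun p hp => ?_
        rw [hb p hp, ← hc, ← Finset.mul_prod_erase S _ hp]
        linear_combination -(c * PowerSeries.C (∏ r ∈ S.erase p, (1 - (p : ℝ) / (r : ℝ))⁻¹) *
          ∏ r ∈ S.erase p, (1 - PowerSeries.C (1 / (r : ℝ)) * PowerSeries.X)) * hgeom p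

lemma tail_bound {h : ℕ → ℝ} {ρ C x : ℝ} (hx0 : 0 < x) (hx : x < ρ)
    (hC : ∀ k, |h k| * ρ ^ k ≤ C) (hC0 : 0 ≤ C) (k : ℕ) :
    |(∑ i ∈ Finset.range (k+1), h i * x ^ i) - ∑' i, h i * x ^ i| / x ^ k ≤
      (C * (1 - x / ρ)⁻¹) * (ρ ^ k)⁻¹ := by
  have hρ : 0 < ρ := hx0.trans hx
  have hs := summable_pow_of_bdd hρ hC (x := x) (by rwa [abs_of_pos hx0])
  have hlt : x / ρ < 1 := (div_lt_one hρ).2 hx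
  have e := hs.of_abs.sum_add_tsum_nat_add (k+1)
  rw [← e, sub_add_cancel_left, abs_neg, div_le_iff₀ (by positivity)]
  have hs' : Summable fun i => |h (i + (k+1)) * x ^ (i + (k+1))| := 
    hs.comp_injective (add_left_injective (k+1))
  have h1 : |∑' i, h (i + (k+1)) * x ^ (i + (k+1))| ≤ ∑' i, |h (i + (k+1)) * x ^ (i + (k+1))| := by
    have hs'' : Summable fun i => ‖h (i + (k+1)) * x ^ (i + (k+1))‖ := by
      simpa only [Real.norm_eq_abs] using hs'
    have := norm_tsum_le_tsum_norm hs''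
    simpa only [Real.norm_eq_abs] using this
  refine h1.trans ?_
  have hg : HasSum (fun i : ℕ => (C * (x / ρ) ^ k) * (x / ρ) ^ i) ((C * (x / ρ) ^ k) * (1 - x / ρ)⁻¹) :=
    (hasSum_geometric_of_lt_one (by positivity) hlt).mul_left _
  have h2 : ∑' i, |h (i + (k+1)) * x ^ (i + (k+1))| ≤ (C * (x / ρ) ^ k) * (1 - x / ρ)⁻¹ := by
    rw [← hg.tsum_eq]
    refine Summable.tsum_le_tsum (fun i => ?_) hs' hg.summable
    have : |h (i + (k+1)) * x ^ (i + (k+1))| =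
        (|h (i + (k+1))| * ρ ^ (i + (k+1))) * (x / ρ) ^ (i + (k+1)) := by
      rw [abs_mul, abs_of_pos (by positivity : 0 < x ^ (i + (k+1))), div_pow]; field_simp
    rw [this, mul_assoc C, ← pow_add]
    refine mul_le_mul (hC _) ?_ (by positivity) hC0
    exact pow_le_pow_of_le_one (by positivity) hlt.le (by omega)
  refine h2.trans (le_of_eq ?_)
  rw [div_pow]; field_simp

theorem ck_expansion (c : ℕ → ℝ) (hc0 : c 0 = 1)
    (hc : ∀ k, 1 ≤ k → c k = (1 / (k : ℝ)) * ∑ j ∈ Finset.Icc 2 k, c (k - j) * Zp j)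
    (α : ℕ → ℝ)
    (hα : ∀ p : ℕ, p.Prime → α p = Real.exp (-1) * ∏' r : {r : Nat.Primes // (r : ℕ) ≠ p},
        (1 - (p : ℝ) / ((r.1 : ℕ) : ℝ))⁻¹ * Real.exp (-(p : ℝ) / ((r.1 : ℕ) : ℝ))) :
    ∀ q : ℕ, q.Prime →
      (fun k : ℕ => c k - ∑ p ∈ Nat.primesBelow q, α p / (p : ℝ) ^ k)
        =O[atTop] fun k : ℕ => ((q : ℝ) ^ k)⁻¹ := by
  intro q hq
  set S := Nat.primesBelow (q+1) with hS
  have hqS : q ∈ S := Nat.mem_primesBelow.2 ⟨by omega, hq⟩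
  have hSp : ∀ p ∈ S, p.Prime ∧ p ≤ q := fun p hp => by
    have := Nat.mem_primesBelow.1 hp
    exact ⟨this.2, by omega⟩
  have hq0 : (0 : ℝ) < q := by exact_mod_cast hq.pos
  -- the power series and the differential equation
  set Zs : PowerSeries ℝ := PowerSeries.mk fun j => if j < 2 then 0 else Zp j with hZs
  have hode : PowerSeries.X * PowerSeries.derivative ℝ (PowerSeries.mk c) = PowerSeries.mk c * Zs := by
    ext n
    rcases n with _ | n
    · simp [PowerSeries.coeff_mul, hZs]
    · rw [PowerSeries.coeff_succ_X_mul, PowerSeries.coeff_derivative, PowerSeries.coeff_mk,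
        hc (n+1) (by omega), PowerSeries.coeff_mul,
        ← Finset.Nat.sum_antidiagonal_swap, Finset.Nat.sum_antidiagonal_eq_sum_range_succ_mk]
      simp only [Prod.fst_swap, Prod.snd_swap, PowerSeries.coeff_mk, hZs]
      have h1 : ∑ j ∈ Finset.Icc 2 (n+1), c (n + 1 - j) * Zp j =
          ∑ j ∈ Finset.range (n+1).succ, c (n + 1 - j) * (if j < 2 then 0 else Zp j) := by
        rw [← Finset.sum_subset (s₁ := Finset.Icc 2 (n+1)) (s₂ := Finset.range (n+1).succ)]
        · refine Finset.sum_congr rfl fun j hj => ?_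
          rw [Finset.mem_Icc] at hj
          rw [if_neg (by omega)]
        · intro j hj
          rw [Finset.mem_Icc] at hj
          rw [Finset.mem_range]; omega
        · intro j hj hj'
          rw [Finset.mem_range] at hj
          rw [Finset.mem_Icc] at hj'
          rw [if_pos (by omega), mul_zero]
      rw [h1]
      have : (n : ℝ) + 1 ≠ 0 := by positivity
      push_cast
      field_simp
  have hode' := ode_mul S (fun p => 1 / (p : ℝ)) _ _ hode
  set hs : PowerSeries ℝ :=
    PowerSeries.mk c * ∏ p ∈ S, (1 - PowerSeries.C (1 / (p : ℝ)) * PowerSeries.X) with hhs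
  set Bs : PowerSeries ℝ := Zs - ∑ p ∈ S, Eser (1 / (p : ℝ)) with hBs
  set h : ℕ → ℝ := fun k => PowerSeries.coeff k hs with hh
  set B : ℕ → ℝ := fun k => PowerSeries.coeff k Bs with hB
  have hrec : ∀ k : ℕ, (k : ℝ) * h k =
      ∑ x ∈ Finset.HasAntidiagonal.antidiagonal k, h x.1 * B x.2 := by
    intro k
    have := congrArg (PowerSeries.coeff k) hode'
    rw [PowerSeries.coeff_mul k hs Bs] at this
    rw [← this]
    rcases k with _ | k
    · simp
    · rw [PowerSeries.coeff_succ_X_mul, PowerSeries.coeff_derivative, hh]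
      push_cast; ring
  have hB0 : B 0 = 0 := by simp [hB, hBs, hZs, Eser]
  have hB1 : B 1 = - ∑ p ∈ S, 1 / (p : ℝ) := by
    simp [hB, hBs, hZs, Eser]
  have hB2 : ∀ k, B (k+2) = wq q (k+2) := by
    intro k
    rw [← Zp_sub q (k+2) (by omega), hB, hBs]
    simp [hZs, Eser, Zp, hS]
  have h0 : h 0 = 1 := by
    simp [hh, hhs, hc0, map_prod]
  -- bounds
  obtain ⟨D, hD⟩ : ∃ D, ∀ k, |B k| * (q + 1 : ℝ) ^ k ≤ D := by
    set D2 := (∑' r : Nat.Primes, (1 : ℝ) / ((r : ℕ) : ℝ) ^ 2) * (q + 1 : ℝ) ^ 2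
    have hD2 : 0 ≤ D2 := mul_nonneg (tsum_nonneg fun r => by positivity) (by positivity)
    refine ⟨D2 + |B 1| * (q + 1 : ℝ), fun k => ?_⟩
    have hb1 : 0 ≤ |B 1| * (q + 1 : ℝ) := by positivity
    rcases k with _ | _ | k
    · rw [hB0]; simp; linarith
    · simp; linarith
    · have := wq_bound q k
      rw [← hB2] at this
      linarith
  set ρ : ℝ := q + 1 / 2 with hρ
  have hρ0 : 0 < ρ := by positivity
  have hρ1 : |ρ| < (q + 1 : ℝ) := by rw [abs_of_pos hρ0]; linarith
  have hBsum : Summable fun j => |B j| * ρ ^ j := by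
    have := summable_pow_of_bdd (by positivity) hD hρ1
    simpa only [abs_mul, abs_pow, abs_of_pos hρ0] using this
  obtain ⟨C, hC0, hC⟩ := bdd_of_rec_s15 h B ρ hρ0 hB0 hBsum hrec
  have hD' : ∀ k, |B k| * ρ ^ k ≤ D := by
    intro k
    refine le_trans ?_ (hD k)
    gcongr
    linarith
  -- value at the primes
  have hval : ∀ p ∈ S, α p = Acoef q p * ∑' k, h k * (p : ℝ) ^ k := by
    intro p hp
    obtain ⟨hpp, hpq⟩ := hSp p hp
    have hp0 : (0 : ℝ) < p := by exact_mod_cast hpp.pos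
    have hpq' : (p : ℝ) ≤ q := by exact_mod_cast hpq
    have hpρ : (p : ℝ) < ρ := by linarith
    rw [hα p hpp, alpha_eq q p hpp hpq,
      H_eq_exp h B ρ C D hρ0 hB0 h0 hC hD' hrec p hp0 hpρ]
    congr 2
    have hsm : Summable fun k : ℕ => B k / k * (p : ℝ) ^ k := by
      refine (summable_pow_of_bdd (ρ := ρ) (C := D) hρ0 (fun k => ?_) (by rwa [abs_of_pos hp0])).of_abs
      refine le_trans (mul_le_mul_of_nonneg_right ?_ (by positivity)) (hD' k)
      rcases k with _ | k
      · simp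
      · rw [abs_div, Nat.abs_cast]
        exact div_le_self (abs_nonneg _) (by simp)
    rw [← hsm.sum_add_tsum_nat_add 2, Finset.sum_range_succ, Finset.sum_range_one, hB0, hB1]
    simp only [hB2]
    congr 1
    simp only [zero_div, zero_mul, zero_add, Nat.cast_one, div_one, pow_one, neg_mul, Finset.sum_mul]
    congr 1
    refine Finset.sum_congr rfl fun r _ => ?_
    ring
  -- partial fractions
  have hpf := partial_frac S ⟨q, hqS⟩ (fun p hp => (hSp p hp).1.ne_zero) hs (PowerSeries.mk c) rfl
  have hck : ∀ k, c k = ∑ p ∈ S, Acoef q p *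
      ((∑ i ∈ Finset.range (k+1), h i * (p : ℝ) ^ i) / (p : ℝ) ^ k) := by
    intro k
    have := congrArg (PowerSeries.coeff k) hpf
    rw [PowerSeries.coeff_mk, map_sum] at this
    rw [this]
    refine Finset.sum_congr rfl fun p hp => ?_
    have hp0 : (p : ℝ) ≠ 0 := by exact_mod_cast (hSp p hp).1.ne_zero
    rw [PowerSeries.coeff_C_mul, PowerSeries.coeff_mul,
      Finset.Nat.sum_antidiagonal_eq_sum_range_succ_mk, Finset.sum_div]
    congr 1
    refine Finset.sum_congr rfl fun i hi => ?_
    have hik : i ≤ k := by rw [Finset.mem_range] at hi; omega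
    simp only [PowerSeries.coeff_mk]
    rw [one_div_pow, mul_div_assoc, pow_sub₀ _ hp0 hik]
    field_simp
    try simp [hh]
  have hSins : S = insert q (Nat.primesBelow q) := by
    ext r
    rw [hS, Finset.mem_insert, Nat.mem_primesBelow, Nat.mem_primesBelow]
    constructor
    · rintro ⟨h1, h2⟩
      by_cases hr : r = q
      · exact Or.inl hr
      · exact Or.inr ⟨by omega, h2⟩
    · rintro (h1 | h1)
      · subst h1; exact ⟨by omega, hq⟩
      · exact ⟨by omega, h1.2⟩
  have hqn : q ∉ Nat.primesBelow q := fun h => by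
    have := (Nat.mem_primesBelow.1 h).1; omega
  have hdiff : ∀ k, c k - ∑ p ∈ Nat.primesBelow q, α p / (p : ℝ) ^ k =
      α q / (q : ℝ) ^ k + ∑ p ∈ S, Acoef q p *
      (((∑ i ∈ Finset.range (k+1), h i * (p : ℝ) ^ i) - ∑' i, h i * (p : ℝ) ^ i) / (p : ℝ) ^ k) := by
    intro k
    have e1 : ∑ p ∈ S, α p / (p : ℝ) ^ k = α q / (q : ℝ) ^ k + ∑ p ∈ Nat.primesBelow q, α p / (p : ℝ) ^ k := by
      rw [hSins, Finset.sum_insert hqn]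
    have e2 : ∑ p ∈ S, Acoef q p *
      (((∑ i ∈ Finset.range (k+1), h i * (p : ℝ) ^ i) - ∑' i, h i * (p : ℝ) ^ i) / (p : ℝ) ^ k)
      = c k - ∑ p ∈ S, α p / (p : ℝ) ^ k := by
      rw [hck k, ← Finset.sum_sub_distrib]
      refine Finset.sum_congr rfl fun p hp => ?_
      rw [hval p hp]; ring
    rw [e2, e1]; ring
  simp only [hdiff]
  refine IsBigO.add ?_ (IsBigO.fun_sum fun p hp => IsBigO.const_mul_left ?_ _)
  · refine IsBigO.of_bound |α q| (Eventually.of_forall fun k => ?_)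
    rw [div_eq_mul_inv, norm_mul, Real.norm_eq_abs (α q)]
  · obtain ⟨hpp, hpq⟩ := hSp p hp
    have hp0 : (0 : ℝ) < p := by exact_mod_cast hpp.pos
    have hpq' : (p : ℝ) ≤ q := by exact_mod_cast hpq
    have hpρ : (p : ℝ) < ρ := by linarith
    have hlt : (p : ℝ) / ρ < 1 := (div_lt_one hρ0).2 hpρ
    have hpos : 0 ≤ C * (1 - (p : ℝ) / ρ)⁻¹ := mul_nonneg hC0 (inv_nonneg.2 (by linarith))
    refine IsBigO.of_bound (C * (1 - (p : ℝ) / ρ)⁻¹) (Eventually.of_forall fun k => ?_)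
    rw [Real.norm_eq_abs, abs_div, abs_of_pos (by positivity : (0 : ℝ) < (p : ℝ) ^ k),
      Real.norm_of_nonneg (by positivity)]
    refine (tail_bound hp0 hpρ hC hC0 k).trans (mul_le_mul_of_nonneg_left ?_ hpos)
    gcongr
    linarith
end

section
/- For fixed integer k ≥ 1, ∑_{Ω(n)=k, n ≤ x} 1/n ∼ (log log x)^k / k! as x → ∞. -/
open Filter Real Asymptotics
open scoped Classical Topology BigOperators

/-- The partial sum of `1/n` over `n ≤ N` with `Ω n = k`. -/
noncomputable def lT (k N : ℕ) : ℝ :=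
  ∑ n ∈ Finset.Icc 1 N, if bigOmega n = k then (1 : ℝ) / n else 0

/-- The partial sum of `1/p` over primes `p ≤ N`. -/
noncomputable def lP (N : ℕ) : ℝ := ∑ p ∈ Nat.primesBelow (N + 1), (1 : ℝ) / p

lemma bigOmega_mul {a b : ℕ} (ha : a ≠ 0) (hb : b ≠ 0) :
    bigOmega (a * b) = bigOmega a + bigOmega b := by
  have := ArithmeticFunction.cardFactors_mul ha hb
  simpa [ArithmeticFunction.cardFactors_apply, bigOmega] using this

lemma bigOmega_prime {p : ℕ} (hp : p.Prime) : bigOmega p = 1 := by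
  simp [bigOmega, Nat.primeFactorsList_prime hp]

lemma lT_nonneg (k N : ℕ) : 0 ≤ lT k N :=
  Finset.sum_nonneg fun n _ => by split_ifs <;> positivity

lemma lT_mono (k : ℕ) {M N : ℕ} (h : M ≤ N) : lT k M ≤ lT k N := by
  refine Finset.sum_le_sum_of_subset_of_nonneg (Finset.Icc_subset_Icc_right h) ?_
  intro n _ _
  split_ifs <;> positivity

/-- Summation over multiples of `d`. -/
lemma sum_multiples (d : ℕ) (hd : 0 < d) (j N : ℕ) :
    ∑ n ∈ Finset.Icc 1 N, (if d ∣ n then (if bigOmega n = bigOmega d + j then (1 : ℝ) / n else 0)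
      else 0) = (1 / d) * lT j (N / d) := by
  rw [← Finset.sum_filter, lT, Finset.mul_sum]
  symm
  refine Finset.sum_bij (fun m _ => d * m) ?_ ?_ ?_ ?_
  · intro m hm
    simp only [Finset.mem_Icc, Finset.mem_filter] at hm ⊢
    refine ⟨⟨Nat.mul_pos hd hm.1, ?_⟩, Dvd.intro _ rfl⟩
    exact (Nat.mul_le_mul_left d hm.2).trans (Nat.mul_div_le N d)
  · intro a _ b _ h
    exact Nat.eq_of_mul_eq_mul_left hd h
  · intro n hn
    simp only [Finset.mem_Icc, Finset.mem_filter] at hn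
    obtain ⟨⟨h1, h2⟩, m, rfl⟩ := hn
    refine ⟨m, ?_, rfl⟩
    simp only [Finset.mem_Icc]
    refine ⟨Nat.pos_of_ne_zero (by rintro rfl; simp at h1), ?_⟩
    rw [Nat.le_div_iff_mul_le hd, mul_comm]; exact h2
  · intro m hm
    simp only [Finset.mem_Icc] at hm
    rw [bigOmega_mul hd.ne' (by omega)]
    have : (bigOmega d + bigOmega m = bigOmega d + j) ↔ bigOmega m = j := by omega
    simp only [this]
    split_ifs
    · push_cast; field_simp
    · simp

lemma primeFactors_eq_filter {n N : ℕ} (h1 : 1 ≤ n) (h2 : n ≤ N) :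
    n.primeFactors = (Nat.primesBelow (N + 1)).filter (fun p => p ∣ n) := by
  ext p
  simp only [Nat.mem_primeFactors, Finset.mem_filter, Nat.mem_primesBelow]
  constructor
  · rintro ⟨hp, hd, _⟩
    exact ⟨⟨by have := Nat.le_of_dvd h1 hd; omega, hp⟩, hd⟩
  · rintro ⟨⟨_, hp⟩, hd⟩
    exact ⟨hp, hd, by omega⟩

lemma card_primeFactors_le (n : ℕ) : n.primeFactors.card ≤ bigOmega n :=
  Multiset.toFinset_card_le (n.primeFactorsList : Multiset ℕ)

lemma card_le_aux {n N : ℕ} (h1 : 1 ≤ n) (h2 : n ≤ N) :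
    (bigOmega n : ℝ) ≤ (∑ p ∈ Nat.primesBelow (N + 1), if p ∣ n then (1 : ℝ) else 0)
      + bigOmega n * ∑ p ∈ Nat.primesBelow (N + 1), if p * p ∣ n then (1 : ℝ) else 0 := by
  have e1 : (∑ p ∈ Nat.primesBelow (N + 1), if p ∣ n then (1 : ℝ) else 0)
      = n.primeFactors.card := by
    rw [primeFactors_eq_filter h1 h2, Finset.sum_boole]
  rw [e1]
  by_cases hs : Squarefree n
  · have := (ArithmeticFunction.cardDistinctFactors_eq_cardFactors_iff_squarefree
      (by omega : n ≠ 0)).2 hs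
    have h : n.primeFactors.card = bigOmega n := by
      rw [ArithmeticFunction.cardDistinctFactors_apply, ArithmeticFunction.cardFactors_apply] at this
      exact this
    rw [h]
    have : (0:ℝ) ≤ bigOmega n * ∑ p ∈ Nat.primesBelow (N + 1), if p * p ∣ n then (1 : ℝ) else 0 :=
      mul_nonneg (by positivity) (Finset.sum_nonneg fun p _ => by split_ifs <;> norm_num)
    linarith
  · rw [Nat.squarefree_iff_prime_squarefree] at hs
    push Not at hs
    obtain ⟨p, hp, hd⟩ := hs
    have hm : p ∈ Nat.primesBelow (N + 1) := by
      rw [Nat.mem_primesBelow]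
      refine ⟨?_, hp⟩
      have := Nat.le_of_dvd h1 ((Dvd.intro _ rfl).trans hd)
      omega
    have : (1:ℝ) ≤ ∑ p ∈ Nat.primesBelow (N + 1), if p * p ∣ n then (1 : ℝ) else 0 := by
      have := Finset.single_le_sum (f := fun p => if p * p ∣ n then (1 : ℝ) else 0)
        (fun i _ => by split_ifs <;> norm_num) hm
      simpa [hd] using this
    have h3 : (0:ℝ) ≤ bigOmega n := by positivity
    have h4 : (0:ℝ) ≤ n.primeFactors.card := by positivity
    nlinarith

lemma swap_aux (N K : ℕ) (s : Finset ℕ) (g : ℕ → ℕ) :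
    ∑ n ∈ Finset.Icc 1 N, (if bigOmega n = K then (1 : ℝ) / n else 0) *
      (∑ p ∈ s, if g p ∣ n then (1 : ℝ) else 0) =
    ∑ p ∈ s, ∑ n ∈ Finset.Icc 1 N,
      (if g p ∣ n then (if bigOmega n = K then (1 : ℝ) / n else 0) else 0) := by
  rw [Finset.sum_comm]
  refine Finset.sum_congr rfl fun n _ => ?_
  rw [Finset.mul_sum]
  refine Finset.sum_congr rfl fun p _ => ?_
  rw [mul_ite, mul_one, mul_zero]

lemma lower_comb (k M : ℕ) : lP M * lT k M ≤ (k + 1) * lT (k + 1) (M * M) := by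
  have h : ∀ p ∈ Nat.primesBelow (M + 1), (1 : ℝ) / p * lT k M ≤
      ∑ n ∈ Finset.Icc 1 (M * M),
        (if p ∣ n then (if bigOmega n = k + 1 then (1 : ℝ) / n else 0) else 0) := by
    intro p hp
    rw [Nat.mem_primesBelow] at hp
    have := sum_multiples p hp.2.pos k (M * M)
    rw [bigOmega_prime hp.2, add_comm 1 k] at this
    rw [this]
    refine mul_le_mul_of_nonneg_left (lT_mono k ?_) (by positivity)
    rw [Nat.le_div_iff_mul_le hp.2.pos]
    exact Nat.mul_le_mul_left M (by omega)
  rw [lP, Finset.sum_mul]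
  refine (Finset.sum_le_sum h).trans ?_
  rw [← swap_aux (M * M) (k + 1) _ (fun p => p), lT, Finset.mul_sum]
  refine Finset.sum_le_sum fun n hn => ?_
  rw [Finset.mem_Icc] at hn
  split_ifs with hb
  · rw [mul_comm]
    refine mul_le_mul_of_nonneg_right ?_ (by positivity)
    rw [Finset.sum_boole]
    have h1 : ((Nat.primesBelow (M + 1)).filter (fun p => p ∣ n)).card ≤ n.primeFactors.card := by
      apply Finset.card_le_card
      intro p hp
      simp only [Nat.mem_primeFactors, Finset.mem_filter, Nat.mem_primesBelow] at hp ⊢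
      exact ⟨hp.1.2, hp.2, by omega⟩
    have h2 := h1.trans (card_primeFactors_le n)
    rw [hb] at h2
    exact_mod_cast h2
  · simp

/-- Constant bounding sums of `1/p^2`. -/
noncomputable def lC : ℝ := ∑' n : ℕ, (1 : ℝ) / (n : ℝ) ^ 2

lemma sum_sq_le (s : Finset ℕ) : ∑ p ∈ s, (1 : ℝ) / (p : ℝ) ^ 2 ≤ lC :=
  Summable.sum_le_tsum s (fun i _ => by positivity)
    (Real.summable_one_div_nat_pow.2 (by norm_num))

lemma upper_comb (k N : ℕ) :
    (k + 1) * lT (k + 1) N ≤ lP N * lT k N + (k + 1) * (lC * lT (k - 1) N) := by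
  have e1 : (k + 1) * lT (k + 1) N ≤
      ∑ n ∈ Finset.Icc 1 N, (if bigOmega n = k + 1 then (1 : ℝ) / n else 0) *
        (∑ p ∈ Nat.primesBelow (N + 1), if p ∣ n then (1 : ℝ) else 0) +
      (k + 1) * ∑ n ∈ Finset.Icc 1 N, (if bigOmega n = k + 1 then (1 : ℝ) / n else 0) *
        (∑ p ∈ Nat.primesBelow (N + 1), if p * p ∣ n then (1 : ℝ) else 0) := by
    rw [lT, Finset.mul_sum, Finset.mul_sum, ← Finset.sum_add_distrib]
    refine Finset.sum_le_sum fun n hn => ?_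
    rw [Finset.mem_Icc] at hn
    have h := card_le_aux hn.1 hn.2
    split_ifs with hb
    · rw [hb] at h
      push_cast at h
      have := mul_le_mul_of_nonneg_right h (by positivity : (0:ℝ) ≤ 1 / (n:ℝ))
      refine this.trans (le_of_eq ?_)
      ring
    · simp
  refine e1.trans ?_
  rw [swap_aux N (k + 1) _ (fun p => p), swap_aux N (k + 1) _ (fun p => p * p)]
  gcongr ?_ + _ * ?_
  · rw [lP, Finset.sum_mul]
    refine Finset.sum_le_sum fun p hp => ?_
    rw [Nat.mem_primesBelow] at hp
    have := sum_multiples p hp.2.pos k N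
    rw [bigOmega_prime hp.2, add_comm 1 k] at this
    rw [this]
    exact mul_le_mul_of_nonneg_left (lT_mono k (Nat.div_le_self _ _)) (by positivity)
  · refine le_trans ?_ (mul_le_mul_of_nonneg_right (sum_sq_le (Nat.primesBelow (N + 1)))
      (lT_nonneg _ _))
    rw [Finset.sum_mul]
    refine Finset.sum_le_sum fun p hp => ?_
    rw [Nat.mem_primesBelow] at hp
    have hO : bigOmega (p * p) = 2 := by
      rw [bigOmega_mul hp.2.ne_zero hp.2.ne_zero, bigOmega_prime hp.2]
    have hpos : 0 < p * p := Nat.mul_pos hp.2.pos hp.2.pos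
    rcases Nat.eq_zero_or_pos k with rfl | hk
    · refine le_trans (le_of_eq ?_) (mul_nonneg (by positivity) (lT_nonneg _ _))
      refine Finset.sum_eq_zero fun n hn => ?_
      rw [Finset.mem_Icc] at hn
      by_cases hd : p * p ∣ n
      · obtain ⟨m, rfl⟩ := hd
        have hm : m ≠ 0 := by rintro rfl; simp at hn
        have : bigOmega (p * p * m) ≠ 0 + 1 := by
          rw [bigOmega_mul hpos.ne' hm, hO]; omega
        rw [if_neg this, ite_self]
      · rw [if_neg hd]
    · have := sum_multiples (p * p) hpos (k - 1) N
      rw [hO, show 2 + (k - 1) = k + 1 by omega] at this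
      rw [this]
      push_cast
      rw [← sq]
      exact mul_le_mul_of_nonneg_left (lT_mono _ (Nat.div_le_self _ _)) (by positivity)

/-- The completely multiplicative function `n ↦ n^(-s)`. -/
noncomputable def powHom (s : ℝ) : ℕ →* ℝ where
  toFun n := (n : ℝ) ^ (-s)
  map_one' := by simp
  map_mul' a b := by push_cast; exact Real.mul_rpow (by positivity) (by positivity)

lemma powHom_apply (s : ℝ) (n : ℕ) : powHom s n = (n : ℝ) ^ (-s) := rfl

lemma powHom_lt_one {s : ℝ} (hs : 0 < s) {p : ℕ} (hp : p.Prime) : ‖powHom s p‖ < 1 := by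
  rw [powHom_apply, Real.norm_of_nonneg (by positivity)]
  exact Real.rpow_lt_one_of_one_lt_of_neg (by exact_mod_cast hp.one_lt) (by linarith)

lemma tsum_rpow_le {s : ℝ} (hs : 1 < s) :
    ∑' n : ℕ, 1 / ((n : ℝ) + 1) ^ s ≤ 1 + 1 / (s - 1) := by
  have h := ZetaAsymptotics.zeta_limit_aux1 hs
  have h2 : 0 ≤ ZetaAsymptotics.termTSum s :=
    tsum_nonneg fun n => ZetaAsymptotics.term_nonneg _ _
  have : 0 ≤ s * ZetaAsymptotics.termTSum s := mul_nonneg (by linarith) h2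
  linarith

lemma sum_rpow_le_log {s : ℝ} (hs : 1 < s) (N : ℕ) :
    ∑ p ∈ Nat.primesBelow N, (p : ℝ) ^ (-s) ≤ Real.log (1 + 1 / (s - 1)) := by
  have hpos : ∀ p ∈ Nat.primesBelow N, 0 < 1 - powHom s p := fun p hp => by
    have := powHom_lt_one (by linarith : 0 < s) (Nat.mem_primesBelow.1 hp).2
    have := (abs_lt.1 this).2
    linarith
  have H := (EulerProduct.summable_and_hasSum_smoothNumbers_prod_primesBelow_geometric
    (f := powHom s) (fun hp => powHom_lt_one (by linarith) hp) N).2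
  have hsum : Summable (fun n : ℕ => powHom s n) := by
    simp only [powHom_apply]
    exact Real.summable_nat_rpow.2 (by linarith)
  have h1 : ∏ p ∈ Nat.primesBelow N, (1 - powHom s p)⁻¹ ≤ 1 + 1 / (s - 1) := by
    rw [← H.tsum_eq]
    have h2 : ∑' m : Nat.smoothNumbers N, powHom s m ≤ ∑' n : ℕ, powHom s n :=
      Summable.tsum_subtype_le _ _ (fun n => by rw [powHom_apply]; positivity) hsum
    refine h2.trans (le_trans (le_of_eq ?_) (tsum_rpow_le hs))
    rw [hsum.tsum_eq_zero_add]
    have : powHom s 0 = 0 := by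
      rw [powHom_apply, Nat.cast_zero, Real.zero_rpow (by linarith)]
    rw [this, zero_add]
    refine tsum_congr fun n => ?_
    rw [powHom_apply, Real.rpow_neg (by positivity)]
    push_cast
    rw [one_div]
  calc ∑ p ∈ Nat.primesBelow N, (p : ℝ) ^ (-s)
      ≤ ∑ p ∈ Nat.primesBelow N, Real.log ((1 - powHom s p)⁻¹) := by
        refine Finset.sum_le_sum fun p hp => ?_
        rw [Real.log_inv, ← powHom_apply]
        have := Real.log_le_sub_one_of_pos (hpos p hp)
        linarith
    _ = Real.log (∏ p ∈ Nat.primesBelow N, (1 - powHom s p)⁻¹) := by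
        rw [Real.log_prod]
        intro p hp
        exact (inv_pos.2 (hpos p hp)).ne'
    _ ≤ _ := Real.log_le_log (Finset.prod_pos fun p hp => inv_pos.2 (hpos p hp)) h1

lemma lP_lower (N : ℕ) (hN : 1 ≤ N) :
    Real.log (Real.log (N + 1)) ≤ lP N + 2 * lC := by
  have H := EulerProduct.summable_and_hasSum_smoothNumbers_prod_primesBelow_geometric
    (f := powHom 1) (fun hp => powHom_lt_one (by norm_num) hp) (N + 1)
  have hle : ∀ p ∈ Nat.primesBelow (N + 1), powHom 1 p = 1 / p ∧ (1:ℝ) / p ≤ 1 / 2 ∧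
      (0:ℝ) < 1 / p := fun p hp => by
    have hp := (Nat.mem_primesBelow.1 hp).2
    have h2 : (2:ℝ) ≤ p := by exact_mod_cast hp.two_le
    refine ⟨by rw [powHom_apply, Real.rpow_neg_one, one_div], ?_, by positivity⟩
    exact one_div_le_one_div_of_le (by norm_num) h2
  have h1 : Real.log (N + 1) ≤ ∏ p ∈ Nat.primesBelow (N + 1), (1 - powHom 1 p)⁻¹ := by
    have h := log_add_one_le_harmonic N
    push_cast at h
    refine h.trans ?_
    rw [← H.2.tsum_eq]
    let e : ℕ → Nat.smoothNumbers (N + 1) := fun i =>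
      if h : i < N then ⟨i + 1, Nat.mem_smoothNumbers_of_lt (by omega) (by omega)⟩
      else ⟨1, Nat.mem_smoothNumbers_of_lt (by omega) (by omega)⟩
    have he : ∀ i ∈ Finset.range N, (e i : ℕ) = i + 1 := fun i hi => by
      simp [e, Finset.mem_range.1 hi]
    have hinj : Set.InjOn e (Finset.range N : Set ℕ) := by
      intro a ha b hb hab
      have := congrArg (fun z : Nat.smoothNumbers (N + 1) => (z : ℕ)) hab
      simp only [he a ha, he b hb] at this
      omega
    have hs := Summable.sum_le_tsum (f := fun m : Nat.smoothNumbers (N + 1) => powHom 1 m)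
      ((Finset.range N).image e)
      (fun i _ => by rw [powHom_apply]; positivity) H.2.summable
    refine le_trans (le_of_eq ?_) hs
    rw [Finset.sum_image hinj, harmonic]
    push_cast
    refine Finset.sum_congr rfl fun i hi => ?_
    rw [he i hi, powHom_apply, Real.rpow_neg_one]
    push_cast
    rfl
  have hlog : 0 < Real.log ((N:ℝ) + 1) := Real.log_pos (by
    have : (1:ℝ) ≤ N := by exact_mod_cast hN
    linarith)
  calc Real.log (Real.log (N + 1))
      ≤ Real.log (∏ p ∈ Nat.primesBelow (N + 1), (1 - powHom 1 p)⁻¹) :=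
        Real.log_le_log hlog h1
    _ = ∑ p ∈ Nat.primesBelow (N + 1), Real.log ((1 - powHom 1 p)⁻¹) := by
        rw [Real.log_prod]
        intro p hp
        obtain ⟨a, b, c⟩ := hle p hp
        rw [a]
        exact inv_ne_zero (by linarith)
    _ ≤ ∑ p ∈ Nat.primesBelow (N + 1), ((1:ℝ) / p + 2 * (1 / (p:ℝ) ^ 2)) := by
        refine Finset.sum_le_sum fun p hp => ?_
        obtain ⟨a, b, c⟩ := hle p hp
        rw [a, Real.log_inv]
        have h3 : (1:ℝ) / (p:ℝ) ^ 2 = (1 / p) ^ 2 := by rw [div_pow, one_pow]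
        rw [h3]
        generalize (1:ℝ) / p = y at *
        have := Real.one_sub_inv_le_log_of_pos (by linarith : 0 < 1 - y)
        have h4 : (1 - y)⁻¹ ≤ 1 + y + 2 * y ^ 2 := by
          rw [inv_le_iff_one_le_mul₀ (by linarith)]
          nlinarith [mul_nonneg (sq_nonneg y) (by linarith : 0 ≤ 1 - 2 * y)]
        linarith
    _ ≤ lP N + 2 * lC := by
        rw [Finset.sum_add_distrib, ← Finset.mul_sum, lP]
        have := sum_sq_le (Nat.primesBelow (N + 1))
        linarith

lemma lP_upper {x : ℝ} (hx : 1 < x) {d : ℝ} (hd : 0 < d) :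
    lP ⌊x⌋₊ ≤ Real.exp (d * Real.log x) * Real.log (1 + 1 / d) := by
  have h := sum_rpow_le_log (s := 1 + d) (by linarith) (⌊x⌋₊ + 1)
  rw [add_sub_cancel_left] at h
  refine le_trans ?_ (mul_le_mul_of_nonneg_left h (Real.exp_pos _).le)
  rw [lP, Finset.mul_sum]
  refine Finset.sum_le_sum fun p hp => ?_
  obtain ⟨h1, hp⟩ := Nat.mem_primesBelow.1 hp
  have hp0 : (0:ℝ) < p := by exact_mod_cast hp.pos
  have hpx : (p:ℝ) ≤ x := (Nat.le_floor_iff (by linarith)).1 (by omega)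
  have e : (p:ℝ) ^ (-(1 + d)) = 1 / p * Real.exp (-(d * Real.log p)) := by
    rw [neg_add, Real.rpow_add hp0, Real.rpow_neg_one, one_div, Real.rpow_def_of_pos hp0]
    congr 2; ring
  rw [e, mul_left_comm, ← Real.exp_add]
  refine le_mul_of_one_le_right (by positivity) (Real.one_le_exp ?_)
  have := Real.log_le_log hp0 hpx
  nlinarith

/-- `log log x`. -/
noncomputable def lL (x : ℝ) : ℝ := Real.log (Real.log x)

lemma lL_tendsto : Tendsto lL atTop atTop :=
  Real.tendsto_log_atTop.comp Real.tendsto_log_atTop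

lemma lP_tendsto : Tendsto (fun x : ℝ => lP ⌊x⌋₊ / lL x) atTop (𝓝 1) := by
  have hinv : Tendsto (fun x => (lL x)⁻¹) atTop (𝓝 0) := lL_tendsto.inv_tendsto_atTop
  have hlow : Tendsto (fun x => 1 - 2 * lC * (lL x)⁻¹) atTop (𝓝 1) := by
    simpa using (tendsto_const_nhds (x := (1:ℝ))).sub (hinv.const_mul (2 * lC))
  have hlogdiv : Tendsto (fun x => Real.log (lL x) / lL x) atTop (𝓝 0) := by
    have := (Real.isLittleO_log_id_atTop.tendsto_div_nhds_zero).comp lL_tendsto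
    simpa [Function.comp_def] using this
  have hup : Tendsto (fun x => Real.exp ((lL x)⁻¹) *
      (Real.log 2 * (lL x)⁻¹ + Real.log (lL x) / lL x + 1)) atTop (𝓝 1) := by
    have h1 : Tendsto (fun x => Real.exp ((lL x)⁻¹)) atTop (𝓝 1) := by
      simpa [Function.comp_def] using (Real.continuous_exp.tendsto 0).comp hinv
    have h2 := h1.mul (((hinv.const_mul (Real.log 2)).add hlogdiv).add_const 1)
    simpa using h2
  refine tendsto_of_tendsto_of_tendsto_of_le_of_le' hlow hup ?_ ?_
  · filter_upwards [lL_tendsto.eventually_gt_atTop 0, eventually_gt_atTop 1] with x hL hx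
    rw [le_div_iff₀ hL]
    have h1 : 1 ≤ ⌊x⌋₊ := Nat.le_floor (by exact_mod_cast hx.le)
    have h := lP_lower _ h1
    have h2 : lL x ≤ Real.log (Real.log (⌊x⌋₊ + 1)) := by
      refine Real.log_le_log (Real.log_pos hx) ?_
      exact Real.log_le_log (by linarith) (Nat.lt_floor_add_one x).le
    have : (1 - 2 * lC * (lL x)⁻¹) * lL x = lL x - 2 * lC := by field_simp
    linarith
  · filter_upwards [lL_tendsto.eventually_ge_atTop 1, eventually_gt_atTop 1,
      Real.tendsto_log_atTop.eventually_ge_atTop 1] with x hL hx hlog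
    rw [div_le_iff₀ (by linarith)]
    have h := lP_upper hx (d := (lL x * Real.log x)⁻¹) (by positivity)
    have e1 : (lL x * Real.log x)⁻¹ * Real.log x = (lL x)⁻¹ := by field_simp
    rw [e1, one_div, inv_inv] at h
    refine h.trans ?_
    rw [mul_assoc]
    refine mul_le_mul_of_nonneg_left ?_ (Real.exp_pos _).le
    have h1 : 1 + lL x * Real.log x ≤ 2 * (lL x * Real.log x) := by nlinarith
    refine (Real.log_le_log (by positivity) h1).trans (le_of_eq ?_)
    have h0 : (lL x) ≠ 0 := by linarith
    rw [Real.log_mul (by norm_num) (by positivity), Real.log_mul h0 (by positivity),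
      show Real.log (Real.log x) = lL x from rfl]
    field_simp
    ring

lemma lL_sqrt_tendsto : Tendsto (fun x => lL (√x) / lL x) atTop (𝓝 1) := by
  have hinv : Tendsto (fun x => (lL x)⁻¹) atTop (𝓝 0) := lL_tendsto.inv_tendsto_atTop
  have h : Tendsto (fun x => 1 - Real.log 2 * (lL x)⁻¹) atTop (𝓝 1) := by
    simpa using (tendsto_const_nhds (x := (1:ℝ))).sub (hinv.const_mul (Real.log 2))
  refine h.congr' ?_
  filter_upwards [lL_tendsto.eventually_gt_atTop 0, eventually_gt_atTop 1] with x hL hx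
  have : lL (√x) = lL x - Real.log 2 := by
    rw [lL, Real.log_sqrt (by linarith), Real.log_div (Real.log_pos hx).ne' (by norm_num), lL]
  rw [this]
  field_simp

lemma sqrt_floor_sq_le {x : ℝ} (hx : 0 ≤ x) : ⌊√x⌋₊ * ⌊√x⌋₊ ≤ ⌊x⌋₊ := by
  rw [Nat.le_floor_iff hx]
  push_cast
  have h := Nat.floor_le (Real.sqrt_nonneg x)
  have h2 := Real.mul_self_sqrt hx
  have h3 : (0:ℝ) ≤ ⌊√x⌋₊ := by positivity
  nlinarith

lemma lT_tendsto (k : ℕ) :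
    Tendsto (fun x : ℝ => lT k ⌊x⌋₊ / lL x ^ k) atTop (𝓝 (1 / (k.factorial : ℝ))) := by
  induction k using Nat.strong_induction_on with
  | _ k ih =>
  rcases k with _ | k
  · refine (tendsto_const_nhds (x := (1 / ((0:ℕ).factorial : ℝ)))).congr' ?_
    filter_upwards [eventually_ge_atTop 1] with x hx
    have h1 : 1 ≤ ⌊x⌋₊ := Nat.le_floor (by exact_mod_cast hx)
    rw [lT, Finset.sum_eq_single 1]
    · simp [bigOmega]
    · intro n hn hn1
      rw [Finset.mem_Icc] at hn
      rw [if_neg]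
      intro h
      rw [bigOmega, List.length_eq_zero_iff, Nat.primeFactorsList_eq_nil] at h
      omega
    · intro h
      exact absurd (Finset.mem_Icc.2 ⟨le_refl 1, h1⟩) h
  have ihk := ih k (by omega)
  have ihk1 := ih (k - 1) (by omega)
  have hfac : (1 : ℝ) / ((k + 1).factorial : ℝ) = (1 / (k + 1)) * (1 * (1 / k.factorial)) := by
    rw [Nat.factorial_succ]; push_cast; field_simp
  have hk0 : (0:ℝ) < k + 1 := by positivity
  have hsq := Real.tendsto_sqrt_atTop
  have hlow : Tendsto (fun x : ℝ => (1 / ((k:ℝ) + 1)) * ((lP ⌊√x⌋₊ / lL (√x)) *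
      (lT k ⌊√x⌋₊ / lL (√x) ^ k)) * (lL (√x) / lL x) ^ (k + 1)) atTop
      (𝓝 (1 / ((k + 1).factorial : ℝ))) := by
    have := (((lP_tendsto.comp hsq).mul (ihk.comp hsq)).const_mul (1 / ((k:ℝ) + 1))).mul
      (lL_sqrt_tendsto.pow (k + 1))
    rw [← hfac, one_pow, mul_one] at this
    exact this
  have hz : Tendsto (fun x : ℝ => lT (k - 1) ⌊x⌋₊ / lL x ^ (k + 1)) atTop (𝓝 0) := by
    have hinv : Tendsto (fun x => (lL x)⁻¹) atTop (𝓝 0) := lL_tendsto.inv_tendsto_atTop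
    have h := ihk1.mul (hinv.pow (k + 1 - (k - 1)))
    rw [zero_pow (by omega), mul_zero] at h
    refine h.congr' ?_
    filter_upwards [lL_tendsto.eventually_gt_atTop 0] with x hL
    have : lL x ^ (k + 1) = lL x ^ (k - 1) * lL x ^ (k + 1 - (k - 1)) := by
      rw [← pow_add]; congr 1; omega
    rw [this, inv_pow, div_mul_eq_div_div, div_eq_mul_inv _ (lL x ^ (k + 1 - (k - 1)))]
  have hup : Tendsto (fun x : ℝ => (1 / ((k:ℝ) + 1)) * ((lP ⌊x⌋₊ / lL x) *
      (lT k ⌊x⌋₊ / lL x ^ k)) + lC * (lT (k - 1) ⌊x⌋₊ / lL x ^ (k + 1))) atTop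
      (𝓝 (1 / ((k + 1).factorial : ℝ))) := by
    have := ((lP_tendsto.mul ihk).const_mul (1 / ((k:ℝ) + 1))).add (hz.const_mul lC)
    rw [← hfac, mul_zero, add_zero] at this
    exact this
  refine tendsto_of_tendsto_of_tendsto_of_le_of_le' hlow hup ?_ ?_
  · filter_upwards [lL_tendsto.eventually_gt_atTop 0, eventually_ge_atTop 0,
      (lL_tendsto.comp hsq).eventually_gt_atTop 0] with x hL hx hLs
    have hLs : 0 < lL (√x) := hLs
    have h := (lower_comb k ⌊√x⌋₊).trans
      (mul_le_mul_of_nonneg_left (lT_mono (k + 1) (sqrt_floor_sq_le hx)) hk0.le)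
    have e : (1 / ((k:ℝ) + 1)) * ((lP ⌊√x⌋₊ / lL (√x)) *
      (lT k ⌊√x⌋₊ / lL (√x) ^ k)) * (lL (√x) / lL x) ^ (k + 1) =
      (lP ⌊√x⌋₊ * lT k ⌊√x⌋₊) / (k + 1) / lL x ^ (k + 1) := by
      rw [div_pow]
      field_simp
      ring
    rw [e]
    gcongr
    rw [div_le_iff₀ hk0]
    linarith
  · filter_upwards [lL_tendsto.eventually_gt_atTop 0] with x hL
    have h := upper_comb k ⌊x⌋₊
    have e : (1 / ((k:ℝ) + 1)) * ((lP ⌊x⌋₊ / lL x) *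
      (lT k ⌊x⌋₊ / lL x ^ k)) + lC * (lT (k - 1) ⌊x⌋₊ / lL x ^ (k + 1)) =
      ((lP ⌊x⌋₊ * lT k ⌊x⌋₊ + (k + 1) * (lC * lT (k - 1) ⌊x⌋₊)) / (k + 1)) / lL x ^ (k + 1) := by
      field_simp
      ring
    rw [e]
    gcongr
    rw [le_div_iff₀ hk0]
    linarith

theorem landau_asymptotic (k : ℕ) (hk : 1 ≤ k) :
    Asymptotics.IsEquivalent atTop
      (fun x : ℝ => ∑ n ∈ Finset.Icc 1 ⌊x⌋₊,
        if bigOmega n = k then (1 : ℝ) / n else 0)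
      (fun x : ℝ => (Real.log (Real.log x)) ^ k / (Nat.factorial k)) := by
  have hf : (k.factorial : ℝ) ≠ 0 := by exact_mod_cast k.factorial_ne_zero
  rw [Asymptotics.isEquivalent_iff_tendsto_one]
  · have h := (lT_tendsto k).mul_const (k.factorial : ℝ)
    rw [one_div_mul_cancel hf] at h
    refine h.congr' (Eventually.of_forall fun x => ?_)
    show lT k ⌊x⌋₊ / lL x ^ k * k.factorial = lT k ⌊x⌋₊ / (lL x ^ k / k.factorial)
    rw [div_div_eq_mul_div, div_mul_eq_mul_div]
  · filter_upwards [lL_tendsto.eventually_gt_atTop 0] with x hL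
    exact div_ne_zero (pow_ne_zero _ (ne_of_gt hL)) hf
end
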